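/- Let p > 2 and let f(s) = s^{q-1} - s^{r-1} with p ≤ r < q, where additionally q < p* in the case R1 = 0. Then the set of non-constant radial solutions u of the Neumann problem on [R1,R2] with u(R1) > 1 is infinite, and the set of non-constant radial solutions with u(R1) < 1 is infinite. -/

import Mathlib

open Real Set Filter Topology

noncomputable def phip (p s : ℝ) : ℝ := |s| ^ (p - 2) * s

def Freg (f : ℝ → ℝ) : Prop :=
  ContinuousOn f (Ici 0) ∧ ContDiffOn ℝ 1 f (Ioi 0)

def Feq (f : ℝ → ℝ) : Prop :=
  f 0 = 0 ∧ f 1 = 0 ∧ (∀ s : ℝ, 0 < s → s < 1 → f s < 0) ∧ (∀ s : ℝ, 1 < s → 0 < f s)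

def Fzero (p : ℝ) (f : ℝ → ℝ) : Prop :=
  ∃ c : ℝ, ∀ᶠ s in 𝓝[>] (0:ℝ), c ≤ f s / s ^ (p - 1)

noncomputable def pstar (p : ℝ) (N : ℕ) : EReal :=
  if p < (N:ℝ) then (((N:ℝ) * p / ((N:ℝ) - p) : ℝ) : EReal) else ⊤

noncomputable def fstar (f : ℝ → ℝ) (s : ℝ) : ℝ := sSup (f '' Icc 1 s)

noncomputable def Fint (f : ℝ → ℝ) (s : ℝ) : ℝ := ∫ σ in (1:ℝ)..s, f σ

def Fsubl (p : ℝ) (f : ℝ → ℝ) : Prop :=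
  ∃ M : ℝ, 0 < M ∧ ∀ ε > 0, ∀ᶠ s in atTop, f s / s ^ (p - 1) ≤ M + ε

def FsubcWith (p : ℝ) (N : ℕ) (f : ℝ → ℝ) (η : ℝ) : Prop :=
  (∀ c : ℝ, ∃ᶠ s in atTop, c < f s / s ^ (p - 1)) ∧
  0 < η ∧ η < 1 ∧
  ∃ L : ℝ, (L : EReal) < pstar p N ∧
    ∀ᶠ s in atTop, fstar f s * s / Fint f (η * s) ≤ L

def Fsubc (p : ℝ) (N : ℕ) (f : ℝ → ℝ) : Prop := ∃ η : ℝ, FsubcWith p N f η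

/-- A radial solution of the Neumann problem on `[R1,R2]`. -/
def NeumannSol (p : ℝ) (N : ℕ) (R1 R2 : ℝ) (f u : ℝ → ℝ) : Prop :=
  (∀ x ∈ Icc R1 R2, DifferentiableAt ℝ u x) ∧
  ContinuousOn (deriv u) (Icc R1 R2) ∧
  (∀ x ∈ Icc R1 R2, 0 < u x) ∧
  deriv u R1 = 0 ∧ deriv u R2 = 0 ∧
  ContinuousOn (fun x => x ^ (N - 1) * phip p (deriv u x)) (Icc R1 R2) ∧
  ∀ x ∈ Ioc R1 R2,
    HasDerivAt (fun t => t ^ (N - 1) * phip p (deriv u t)) (-(x ^ (N - 1)) * f (u x)) x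

noncomputable def fhat (f : ℝ → ℝ) (s : ℝ) : ℝ := if 0 ≤ s then f s else 0

noncomputable def Fhat (f : ℝ → ℝ) (s : ℝ) : ℝ := ∫ σ in (1:ℝ)..s, fhat f σ

/-- A solution of the Cauchy problem with datum `d`, for the nonlinearity `g`. -/
def CauchySol (p : ℝ) (N : ℕ) (R1 R2 : ℝ) (g u : ℝ → ℝ) (d : ℝ) : Prop :=
  (∀ x ∈ Icc R1 R2, DifferentiableAt ℝ u x) ∧
  ContinuousOn (deriv u) (Icc R1 R2) ∧
  u R1 = d ∧ deriv u R1 = 0 ∧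
  ContinuousOn (fun x => x ^ (N - 1) * phip p (deriv u x)) (Icc R1 R2) ∧
  ∀ x ∈ Ioc R1 R2,
    HasDerivAt (fun t => t ^ (N - 1) * phip p (deriv u t)) (-(x ^ (N - 1)) * g (u x)) x

noncomputable def rOne (R1 R2 : ℝ) (u : ℝ → ℝ) : ℝ :=
  sSup {x | x ∈ Icc R1 R2 ∧ ∀ s ∈ Ico R1 x, 0 < u s}

noncomputable def rZero (R2 η d : ℝ) (u : ℝ → ℝ) : ℝ :=
  sSup {x | x ∈ Icc 0 R2 ∧ ∀ s ∈ Ico 0 x, η * d < u s}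

noncomputable def energy (p : ℝ) (f u : ℝ → ℝ) (x : ℝ) : ℝ :=
  |deriv u x| ^ p / (p / (p - 1)) + Fhat f (u x)

def NonConstOn (R1 R2 : ℝ) (u : ℝ → ℝ) : Prop :=
  ∃ x ∈ Icc R1 R2, ∃ x' ∈ Icc R1 R2, u x ≠ u x'

def DistinctOn (R1 R2 : ℝ) (u v : ℝ → ℝ) : Prop :=
  ∃ x ∈ Icc R1 R2, u x ≠ v x

noncomputable def nOverPstar (p : ℝ) (N : ℕ) : ℝ :=
  if p < (N:ℝ) then ((N:ℝ) - p) / p else 0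

/-- The regularised inverse `s ↦ s (s² + ε²)^((α-1)/2)` of the `p`-Laplace power, `α = 1/(p-1)`. -/
noncomputable def regInv (α ε s : ℝ) : ℝ := s * (s ^ 2 + ε ^ 2) ^ ((α - 1) / 2)

/-- The primitive of `regInv` vanishing at `0`. -/
noncomputable def regPot (α ε s : ℝ) : ℝ :=
  ((s ^ 2 + ε ^ 2) ^ ((α + 1) / 2) - (ε ^ 2) ^ ((α + 1) / 2)) / (α + 1)

theorem hasDerivAt_regPot {α ε : ℝ} (hα : 0 < α) (hε : 0 < ε) (s : ℝ) :
    HasDerivAt (regPot α ε) (regInv α ε s) s := by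
  have h1 : HasDerivAt (fun s : ℝ => s ^ 2 + ε ^ 2) (2 * s) s := by
    simpa using (hasDerivAt_pow 2 s).add_const (ε ^ 2)
  have h2 := h1.rpow_const (p := (α + 1) / 2) (Or.inl (by positivity))
  have h3 := (h2.sub_const ((ε ^ 2) ^ ((α + 1) / 2))).div_const (α + 1)
  refine h3.congr_deriv ?_
  have : (α + 1) / 2 - 1 = (α - 1) / 2 := by ring
  rw [this, regInv]
  field_simp

theorem abs_regInv_le {α ε : ℝ} (hα : 0 < α) (hα1 : α < 1) (s : ℝ) :
    |regInv α ε s| ≤ |s| ^ α := by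
  rcases eq_or_ne s 0 with rfl | hs
  · simp [regInv, Real.zero_rpow hα.ne']
  have hs' : 0 < |s| := abs_pos.2 hs
  have h0 : (0:ℝ) ≤ s ^ 2 + ε ^ 2 := by positivity
  rw [regInv, abs_mul, abs_of_nonneg (Real.rpow_nonneg h0 _)]
  have h1 : (s ^ 2 + ε ^ 2) ^ ((α - 1) / 2) ≤ (|s| ^ 2) ^ ((α - 1) / 2) := by
    apply Real.rpow_le_rpow_of_nonpos (by positivity) _ (by linarith)
    rw [sq_abs]; nlinarith [sq_nonneg ε]
  calc |s| * (s ^ 2 + ε ^ 2) ^ ((α - 1) / 2) ≤ |s| * (|s| ^ 2) ^ ((α - 1) / 2) := by gcongr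
    _ = |s| ^ (1:ℝ) * |s| ^ (α - 1) := by
        rw [← Real.rpow_natCast, ← Real.rpow_mul hs'.le, Real.rpow_one]; congr 2; push_cast; ring
    _ = |s| ^ α := by rw [← Real.rpow_add hs']; congr 1; ring

theorem mul_regInv_nonneg (α ε s : ℝ) : 0 ≤ s * regInv α ε s := by
  have h0 : (0:ℝ) ≤ s ^ 2 + ε ^ 2 := by positivity
  have := Real.rpow_nonneg h0 ((α - 1) / 2)
  rw [regInv, ← mul_assoc]
  exact mul_nonneg (mul_self_nonneg s) this

theorem mul_regInv_le_regPot {α ε : ℝ} (hα : 0 < α) (hα1 : α < 1) (hε : 0 < ε) (s : ℝ) :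
    s * regInv α ε s ≤ 2 * regPot α ε s := by
  have hP : 0 < s ^ 2 + ε ^ 2 := by positivity
  have hb := _root_.rpow_one_add_le_one_add_mul_self (s := ε ^ 2 / (s ^ 2 + ε ^ 2) - 1)
    (by have : 0 ≤ ε ^ 2 / (s ^ 2 + ε ^ 2) := by positivity
        linarith) (p := (α + 1) / 2) (by linarith) (by linarith)
  have e1 : 1 + (ε ^ 2 / (s ^ 2 + ε ^ 2) - 1) = ε ^ 2 / (s ^ 2 + ε ^ 2) := by ring
  rw [e1, Real.div_rpow (by positivity) hP.le] at hb
  have hQ : 0 < (s ^ 2 + ε ^ 2) ^ ((α - 1) / 2) := Real.rpow_pos_of_pos hP _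
  have e2 : (s ^ 2 + ε ^ 2) ^ ((α + 1) / 2) = (s ^ 2 + ε ^ 2) ^ ((α - 1) / 2) * (s ^ 2 + ε ^ 2) := by
    rw [← Real.rpow_add_one hP.ne']; congr 1; ring
  rw [regInv, regPot, e2]
  rw [e2] at hb
  rw [div_le_iff₀ (by positivity)] at hb
  have e3 : (1 + (α + 1) / 2 * (ε ^ 2 / (s ^ 2 + ε ^ 2) - 1)) *
      ((s ^ 2 + ε ^ 2) ^ ((α - 1) / 2) * (s ^ 2 + ε ^ 2))
      = (s ^ 2 + ε ^ 2) ^ ((α - 1) / 2) * (s ^ 2 + ε ^ 2)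
        - (α + 1) / 2 * s ^ 2 * (s ^ 2 + ε ^ 2) ^ ((α - 1) / 2) := by
    field_simp; ring
  rw [e3] at hb
  rw [← mul_div_assoc, le_div_iff₀ (by linarith)]
  nlinarith

theorem regPot_nonneg {α ε : ℝ} (hα : 0 < α) (hα1 : α < 1) (hε : 0 < ε) (s : ℝ) :
    0 ≤ regPot α ε s := by
  linarith [mul_regInv_nonneg α ε s, mul_regInv_le_regPot hα hα1 hε s]

theorem regPot_le {α ε : ℝ} (hα : 0 < α) (hα1 : α < 1) (s : ℝ) :
    regPot α ε s ≤ (s ^ 2) ^ ((α + 1) / 2) := by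
  have h := Real.rpow_add_le_add_rpow (sq_nonneg s) (sq_nonneg ε) (p := (α + 1) / 2)
    (by linarith) (by linarith)
  have h0 := Real.rpow_nonneg (sq_nonneg s) ((α + 1) / 2)
  rw [regPot, div_le_iff₀ (by linarith)]
  nlinarith

theorem le_mul_regInv {α ε κ s : ℝ} (hα1 : α < 1) (hε : 0 < ε) (hεκ : ε ≤ κ)
    (hs : |s| ≤ κ) : (2 * κ ^ 2) ^ ((α - 1) / 2) * s ^ 2 ≤ s * regInv α ε s := by
  have h1 : (2 * κ ^ 2) ^ ((α - 1) / 2) ≤ (s ^ 2 + ε ^ 2) ^ ((α - 1) / 2) := by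
    apply Real.rpow_le_rpow_of_nonpos (by positivity) _ (by linarith)
    have := sq_le_sq' (by linarith [neg_abs_le s]) ((le_abs_self s).trans hs)
    nlinarith
  rw [regInv]
  nlinarith [sq_nonneg s]

theorem contDiff_regInv {α ε : ℝ} (hε : 0 < ε) : ContDiff ℝ 1 (regInv α ε) := by
  unfold regInv
  refine contDiff_id.mul (ContDiff.rpow_const_of_ne (by fun_prop) fun s => by positivity)

theorem continuous_regInv {α ε : ℝ} (hα : 0 < α) (hα1 : α < 1) : Continuous (regInv α ε) := by
  rw [continuous_iff_continuousAt]
  intro s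
  rcases eq_or_ne s 0 with rfl | hs
  · have h0 : regInv α ε 0 = 0 := by simp [regInv]
    rw [ContinuousAt, h0]
    refine squeeze_zero_norm (fun s => abs_regInv_le hα hα1 s) ?_
    have : ContinuousAt (fun s : ℝ => |s| ^ α) 0 :=
      (continuous_abs.continuousAt).rpow_const (Or.inr hα.le)
    simpa [ContinuousAt, Real.zero_rpow hα.ne'] using this
  · unfold regInv
    refine continuousAt_id.mul (ContinuousAt.rpow_const (by fun_prop) (Or.inl ?_))
    positivity

theorem tendsto_regInv {ι : Type*} {l : Filter ι} {α : ℝ} (hα : 0 < α) (hα1 : α < 1)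
    {e σ : ι → ℝ} {s : ℝ} (he : Tendsto e l (𝓝 0)) (hσ : Tendsto σ l (𝓝 s)) :
    Tendsto (fun i => regInv α (e i) (σ i)) l (𝓝 (regInv α 0 s)) := by
  rcases eq_or_ne s 0 with rfl | hs
  · have h0 : regInv α 0 0 = 0 := by simp [regInv]
    rw [h0]
    refine squeeze_zero_norm (fun i => abs_regInv_le hα hα1 (σ i)) ?_
    have := (hσ.abs).rpow_const (p := α) (Or.inr hα.le)
    simpa [Real.zero_rpow hα.ne'] using this
  · unfold regInv
    refine hσ.mul (Tendsto.rpow_const ((hσ.pow 2).add (he.pow 2)) (Or.inl ?_))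
    positivity

theorem phip_regInv {p : ℝ} (hp : 2 < p) (s : ℝ) : phip p (regInv (1 / (p - 1)) 0 s) = s := by
  rcases eq_or_ne s 0 with rfl | hs
  · simp [phip, regInv]
  have hs' : 0 < |s| := abs_pos.2 hs
  have e : (s ^ 2 + 0 ^ 2) ^ ((1 / (p - 1) - 1) / 2) = |s| ^ (1 / (p - 1) - 1) := by
    rw [← sq_abs, zero_pow two_ne_zero, add_zero, ← Real.rpow_natCast, ← Real.rpow_mul hs'.le]
    congr 1; push_cast; ring
  rw [phip, regInv, e, abs_mul, abs_of_pos (Real.rpow_pos_of_pos hs' _)]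
  have e2 : |s| * |s| ^ (1 / (p - 1) - 1) = |s| ^ (1 / (p - 1)) := by
    rw [mul_comm, ← Real.rpow_add_one hs'.ne']; congr 1; ring
  rw [e2, ← Real.rpow_mul hs'.le, mul_comm s, ← mul_assoc, ← Real.rpow_add hs']
  have e3 : 1 / (p - 1) * (p - 2) + (1 / (p - 1) - 1) = 0 := by
    have : p - 1 ≠ 0 := by linarith
    field_simp; ring
  rw [e3, Real.rpow_zero, one_mul]

/-- A bounded Lipschitz nonlinearity with the sign of its argument and at least linear near `0`. -/
structure IsForce (h : ℝ → ℝ) (C K c η : ℝ) : Prop where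
  C_pos : 0 < C
  c_pos : 0 < c
  η_pos : 0 < η
  lip : ∀ x y, |h x - h y| ≤ C * |x - y|
  zero : h 0 = 0
  bdd : ∀ x, |h x| ≤ K
  sign : ∀ x, 0 ≤ x * h x
  lower : ∀ x, |x| ≤ η → c * x ^ 2 ≤ x * h x

/-- The primitive of `h` vanishing at `0`. -/
noncomputable def forcePot (h : ℝ → ℝ) (y : ℝ) : ℝ := ∫ t in (0:ℝ)..y, h t

namespace IsForce

variable {h : ℝ → ℝ} {C K c η : ℝ}

theorem continuous (hh : IsForce h C K c η) : Continuous h := by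
  have : LipschitzWith (Real.toNNReal C) h := LipschitzWith.of_dist_le_mul fun x y => by
    rw [Real.dist_eq, Real.dist_eq, Real.coe_toNNReal _ hh.C_pos.le]; exact hh.lip x y
  exact this.continuous

theorem K_nonneg (hh : IsForce h C K c η) : 0 ≤ K := (abs_nonneg _).trans (hh.bdd 0)

theorem abs_le (hh : IsForce h C K c η) (y : ℝ) : |h y| ≤ C * |y| := by
  simpa [hh.zero] using hh.lip y 0

theorem hasDerivAt_forcePot (hh : IsForce h C K c η) (y : ℝ) :
    HasDerivAt (forcePot h) (h y) y :=
  intervalIntegral.integral_hasDerivAt_right (hh.continuous.intervalIntegrable _ _)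
    hh.continuous.aestronglyMeasurable.stronglyMeasurableAtFilter hh.continuous.continuousAt

theorem neg (hh : IsForce h C K c η) : IsForce (fun y => -h (-y)) C K c η where
  C_pos := hh.C_pos
  c_pos := hh.c_pos
  η_pos := hh.η_pos
  lip x y := by
    have := hh.lip (-y) (-x)
    rw [show -y - -x = x - y by ring] at this
    rwa [show -h (-x) - -h (-y) = h (-y) - h (-x) by ring]
  zero := by simp [hh.zero]
  bdd x := by simpa using hh.bdd (-x)
  sign x := by linarith [hh.sign (-x)]
  lower x hx := by
    have := hh.lower (-x) (by simpa using hx)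
    nlinarith

theorem forcePot_neg (h : ℝ → ℝ) (y : ℝ) :
    forcePot (fun t => -h (-t)) y = forcePot h (-y) := by
  unfold forcePot
  rw [intervalIntegral.integral_neg, intervalIntegral.integral_comp_neg,
    ← intervalIntegral.integral_symm, neg_zero]

theorem forcePot_zero (h : ℝ → ℝ) : forcePot h 0 = 0 := by simp [forcePot]

theorem forcePot_le (hh : IsForce h C K c η) (y : ℝ) : forcePot h y ≤ C * y ^ 2 / 2 := by
  wlog hy : 0 ≤ y generalizing y h
  · have := this hh.neg (-y) (by linarith)
    rw [forcePot_neg, neg_neg] at this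
    simpa using this
  have hd : ∀ t, HasDerivAt (fun t => C * t ^ 2 / 2 - forcePot h t) (C * t - h t) t := fun t => by
    refine ((((hasDerivAt_pow 2 t).const_mul C).div_const 2).sub
      (hh.hasDerivAt_forcePot t)).congr_deriv ?_
    norm_num; ring
  have hm : MonotoneOn (fun t => C * t ^ 2 / 2 - forcePot h t) (Ici 0) := by
    refine monotoneOn_of_deriv_nonneg (convex_Ici 0)
      (fun t _ => (hd t).continuousAt.continuousWithinAt)
      (fun t _ => (hd t).differentiableAt.differentiableWithinAt) fun t ht => ?_
    rw [interior_Ici] at ht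
    rw [(hd t).deriv]
    have := (le_abs_self _).trans (hh.abs_le t)
    rw [abs_of_pos ht] at this
    linarith
  have := hm (mem_Ici.2 le_rfl) (mem_Ici.2 hy) hy
  simp [forcePot_zero] at this
  linarith

theorem le_forcePot (hh : IsForce h C K c η) (y : ℝ) :
    c * (min |y| η) ^ 2 / 2 ≤ forcePot h y := by
  wlog hy : 0 ≤ y generalizing y h
  · have := this hh.neg (-y) (by linarith)
    rw [forcePot_neg, neg_neg] at this
    simpa using this
  rw [abs_of_nonneg hy]
  have h1 : ∀ z, 0 ≤ z → z ≤ η → c * z ^ 2 / 2 ≤ forcePot h z := by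
    intro z hz hzη
    have hd : ∀ t, HasDerivAt (fun t => forcePot h t - c * t ^ 2 / 2) (h t - c * t) t := fun t => by
      refine ((hh.hasDerivAt_forcePot t).sub
        (((hasDerivAt_pow 2 t).const_mul c).div_const 2)).congr_deriv ?_
      norm_num; ring
    have hm : MonotoneOn (fun t => forcePot h t - c * t ^ 2 / 2) (Icc 0 η) := by
      refine monotoneOn_of_deriv_nonneg (convex_Icc 0 η)
        (fun t _ => (hd t).continuousAt.continuousWithinAt)
        (fun t _ => (hd t).differentiableAt.differentiableWithinAt) fun t ht => ?_
      rw [interior_Icc] at ht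
      rw [(hd t).deriv]
      have h2 := hh.lower t (by rw [abs_of_pos ht.1]; exact ht.2.le)
      have : t * (c * t) ≤ t * h t := by nlinarith
      linarith [le_of_mul_le_mul_left this ht.1]
    have := hm (left_mem_Icc.2 hh.η_pos.le) ⟨hz, hzη⟩ hz
    simp [forcePot_zero] at this
    linarith
  have hm : MonotoneOn (forcePot h) (Ici 0) := by
    refine monotoneOn_of_deriv_nonneg (convex_Ici 0)
      (fun t _ => (hh.hasDerivAt_forcePot t).continuousAt.continuousWithinAt)
      (fun t _ => (hh.hasDerivAt_forcePot t).differentiableAt.differentiableWithinAt) fun t ht => ?_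
    rw [interior_Ici] at ht
    rw [(hh.hasDerivAt_forcePot t).deriv]
    exact nonneg_of_mul_nonneg_right (hh.sign t) ht
  have hmin : 0 ≤ min y η := le_min hy hh.η_pos.le
  exact (h1 _ hmin (min_le_right _ _)).trans (hm hmin hy (min_le_left _ _))

theorem forcePot_nonneg (hh : IsForce h C K c η) (y : ℝ) : 0 ≤ forcePot h y := by
  have := hh.c_pos
  exact le_trans (by positivity) (hh.le_forcePot y)

end IsForce

theorem abs_le_of_hasDerivWithinAt {ε : ℝ} {n : ℕ} {h : ℝ → ℝ} {A B : ℝ} {y v : ℝ → ℝ}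
    (hv : ∀ x ∈ Icc A B, HasDerivWithinAt v (-((x + ε) ^ n * h (y x))) (Icc A B) x)
    (hvA : v A = 0) (hA : 0 ≤ A) (hε : 0 ≤ ε) {k : ℝ}
    (hk : ∀ x ∈ Icc A B, |h (y x)| ≤ k) {x : ℝ} (hx : x ∈ Icc A B) :
    |v x| ≤ (x + ε) ^ n * (k * (x - A)) := by
  have h1 : ∀ t ∈ Icc A x, HasDerivWithinAt v (-((t + ε) ^ n * h (y t))) (Icc A x) t := fun t ht =>
    (hv t ⟨ht.1, ht.2.trans hx.2⟩).mono (Icc_subset_Icc le_rfl hx.2)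
  have := norm_image_sub_le_of_norm_deriv_le_segment' (C := (x + ε) ^ n * k) h1
    (fun t ht => by
      have h0 : 0 ≤ t + ε := by linarith [ht.1]
      rw [norm_neg, norm_mul, Real.norm_eq_abs, Real.norm_eq_abs, abs_of_nonneg (by positivity)]
      gcongr
      · exact pow_nonneg (by linarith [hx.1]) n
      · exact ht.2.le
      · exact hk t ⟨ht.1, ht.2.le.trans hx.2⟩) x (right_mem_Icc.2 hx.1)
  rw [hvA, sub_zero, Real.norm_eq_abs] at this
  linarith

/-- A solution on `[A, B]` of the regularised first order system. -/
structure RegSol (α ε : ℝ) (n : ℕ) (h : ℝ → ℝ) (A B : ℝ) (y v : ℝ → ℝ) : Prop where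
  hy : ∀ x ∈ Icc A B, HasDerivWithinAt y (regInv α ε (v x / (x + ε) ^ n)) (Icc A B) x
  hv : ∀ x ∈ Icc A B, HasDerivWithinAt v (-((x + ε) ^ n * h (y x))) (Icc A B) x
  v_left : v A = 0

/-- The energy of a solution of the regularised system. -/
noncomputable def regEnergy (α ε : ℝ) (n : ℕ) (h y v : ℝ → ℝ) (x : ℝ) : ℝ :=
  regPot α ε (v x / (x + ε) ^ n) + forcePot h (y x)

namespace RegSol

variable {α ε : ℝ} {n : ℕ} {h : ℝ → ℝ} {A B C K c η : ℝ} {y v : ℝ → ℝ}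

theorem abs_v_le (hs : RegSol α ε n h A B y v) (hA : 0 ≤ A) (hε : 0 ≤ ε) {k : ℝ}
    (hk : ∀ x ∈ Icc A B, |h (y x)| ≤ k) {x : ℝ} (hx : x ∈ Icc A B) :
    |v x| ≤ (x + ε) ^ n * (k * (x - A)) :=
  abs_le_of_hasDerivWithinAt hs.hv hs.v_left hA hε hk hx

theorem abs_slope_le (hs : RegSol α ε n h A B y v) (hA : 0 ≤ A) (hε : 0 < ε) {k : ℝ}
    (hk : ∀ x ∈ Icc A B, |h (y x)| ≤ k) {x : ℝ} (hx : x ∈ Icc A B) :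
    |v x / (x + ε) ^ n| ≤ k * (B - A) := by
  have h0 : 0 < (x + ε) ^ n := pow_pos (by linarith [hx.1]) n
  have hk0 : 0 ≤ k := (abs_nonneg _).trans (hk x hx)
  rw [abs_div, abs_of_pos h0, div_le_iff₀ h0]
  refine (hs.abs_v_le hA hε.le hk hx).trans ?_
  rw [mul_comm]
  gcongr
  exact hx.2

theorem hasDerivAt_regEnergy (hs : RegSol α ε n h A B y v) (hα : 0 < α) (hA : 0 ≤ A) (hε : 0 < ε)
    (hh : IsForce h C K c η) {x : ℝ} (hx : x ∈ Ioo A B) :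
    HasDerivAt (regEnergy α ε n h y v)
      (-(v x / (x + ε) ^ n * regInv α ε (v x / (x + ε) ^ n) * (n * (x + ε) ^ (n - 1) / (x + ε) ^ n)))
      x := by
  have hw : 0 < (x + ε) ^ n := pow_pos (by linarith [hx.1]) n
  have hx' := Ioo_subset_Icc_self hx
  have hy := (hs.hy x hx').hasDerivAt (Icc_mem_nhds hx.1 hx.2)
  have hv := (hs.hv x hx').hasDerivAt (Icc_mem_nhds hx.1 hx.2)
  have hd : HasDerivAt (fun x : ℝ => (x + ε) ^ n) (n * (x + ε) ^ (n - 1)) x := by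
    simpa using ((hasDerivAt_id x).add_const ε).fun_pow n
  have h1 := (hasDerivAt_regPot hα hε (v x / (x + ε) ^ n)).comp x (hv.div hd hw.ne')
  have h2 := (hh.hasDerivAt_forcePot (y x)).comp x hy
  refine (h1.add h2).congr_deriv ?_
  field_simp
  ring

theorem continuousOn_y (hs : RegSol α ε n h A B y v) : ContinuousOn y (Icc A B) :=
  fun x hx => (hs.hy x hx).continuousWithinAt

theorem continuousOn_v (hs : RegSol α ε n h A B y v) : ContinuousOn v (Icc A B) :=
  fun x hx => (hs.hv x hx).continuousWithinAt

theorem continuousOn_slope (hs : RegSol α ε n h A B y v) (hA : 0 ≤ A) (hε : 0 < ε) :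
    ContinuousOn (fun x => v x / (x + ε) ^ n) (Icc A B) :=
  hs.continuousOn_v.div (by fun_prop) fun x hx => (pow_pos (by linarith [hx.1]) n).ne'

theorem continuousOn_regEnergy (hs : RegSol α ε n h A B y v) (hα : 0 < α) (hA : 0 ≤ A) (hε : 0 < ε)
    (hh : IsForce h C K c η) : ContinuousOn (regEnergy α ε n h y v) (Icc A B) := by
  have h1 : Continuous (regPot α ε) :=
    continuous_iff_continuousAt.2 fun s => (hasDerivAt_regPot hα hε s).continuousAt
  have h2 : Continuous (forcePot h) :=
    continuous_iff_continuousAt.2 fun s => (hh.hasDerivAt_forcePot s).continuousAt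
  exact (h1.comp_continuousOn (hs.continuousOn_slope hA hε)).add
    (h2.comp_continuousOn hs.continuousOn_y)

theorem antitoneOn_regEnergy (hs : RegSol α ε n h A B y v) (hα : 0 < α) (hA : 0 ≤ A) (hε : 0 < ε)
    (hh : IsForce h C K c η) : AntitoneOn (regEnergy α ε n h y v) (Icc A B) := by
  refine antitoneOn_of_deriv_nonpos (convex_Icc A B) (hs.continuousOn_regEnergy hα hA hε hh)
    (fun x hx => ?_) fun x hx => ?_
  all_goals
    rw [interior_Icc] at hx
    have hd := hs.hasDerivAt_regEnergy hα hA hε hh hx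
  · exact hd.differentiableAt.differentiableWithinAt
  · rw [hd.deriv, neg_nonpos]
    have : 0 < x + ε := by linarith [hx.1]
    exact mul_nonneg (mul_regInv_nonneg _ _ _) (by positivity)

theorem monotoneOn_regEnergy_mul (hs : RegSol α ε n h A B y v) (hα : 0 < α) (hα1 : α < 1)
    (hA : 0 ≤ A) (hε : 0 < ε) (hh : IsForce h C K c η) :
    MonotoneOn (fun x => regEnergy α ε n h y v x * ((x + ε) ^ n) ^ 2) (Icc A B) := by
  refine monotoneOn_of_deriv_nonneg (convex_Icc A B)
    ((hs.continuousOn_regEnergy hα hA hε hh).mul (by fun_prop))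
    (fun x hx => ?_) fun x hx => ?_
  all_goals
    rw [interior_Icc] at hx
    have hd : HasDerivAt (fun x : ℝ => (x + ε) ^ n) (n * (x + ε) ^ (n - 1)) x := by
      simpa using ((hasDerivAt_id x).add_const ε).fun_pow n
    have hd := (hs.hasDerivAt_regEnergy hα hA hε hh hx).mul (hd.pow 2)
  · exact hd.differentiableAt.differentiableWithinAt
  · refine le_of_le_of_eq ?_ hd.deriv.symm
    have h0 : 0 < x + ε := by linarith [hx.1]
    have hE := mul_regInv_le_regPot hα hα1 hε (v x / (x + ε) ^ n)
    have hH := hh.forcePot_nonneg (y x)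
    have key : 0 ≤ (n * (x + ε) ^ (n - 1)) * (x + ε) ^ n * (2 * regEnergy α ε n h y v x -
        v x / (x + ε) ^ n * regInv α ε (v x / (x + ε) ^ n)) := by
      apply mul_nonneg (by positivity)
      unfold regEnergy; linarith
    refine key.trans_eq ?_
    simp only [Pi.pow_apply]
    field_simp
    ring

end RegSol

/-- The angular speed of the curve `(a y, v)`, turning clockwise. -/
noncomputable def rotRate (α ε : ℝ) (n : ℕ) (h : ℝ → ℝ) (a x y v : ℝ) : ℝ :=
  a * (v * regInv α ε (v / (x + ε) ^ n) + (x + ε) ^ n * (y * h y)) / ((a * y) ^ 2 + v ^ 2)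

theorem rotRate_nonneg {α ε : ℝ} {n : ℕ} {h : ℝ → ℝ} {a x y v C K c η : ℝ}
    (hh : IsForce h C K c η) (ha : 0 < a) (hx : 0 < x + ε) : 0 ≤ rotRate α ε n h a x y v := by
  have hw : 0 < (x + ε) ^ n := pow_pos hx n
  have h1 := mul_regInv_nonneg α ε (v / (x + ε) ^ n)
  have h2 : v * regInv α ε (v / (x + ε) ^ n)
      = (x + ε) ^ n * (v / (x + ε) ^ n * regInv α ε (v / (x + ε) ^ n)) := by field_simp
  have h3 := hh.sign y
  unfold rotRate
  rw [h2]
  positivity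

theorem le_rotRate {α ε : ℝ} {n : ℕ} {h : ℝ → ℝ} {a x y v C K c η M lo hi : ℝ}
    (hh : IsForce h C K c η) (ha : 0 < a) (hM : 0 < M)
    (hx : 0 < x + ε)
    (hwlo : lo ≤ (x + ε) ^ n) (hwhi : (x + ε) ^ n ≤ hi) (haM : a ^ 2 * M = c * lo * hi)
    (hψ : M * (v / (x + ε) ^ n) ^ 2 ≤ v / (x + ε) ^ n * regInv α ε (v / (x + ε) ^ n))
    (hy : |y| ≤ η) (hne : 0 < y ^ 2 + v ^ 2) :
    a * M / hi ≤ rotRate α ε n h a x y v := by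
  have hw : 0 < (x + ε) ^ n := pow_pos hx n
  have hhi : 0 < hi := hw.trans_le hwhi
  have hden : 0 < (a * y) ^ 2 + v ^ 2 := by
    rcases eq_or_ne v 0 with rfl | hv
    · have hy0 : y ≠ 0 := by rintro rfl; simp at hne
      positivity
    · positivity
  have h2 : v * regInv α ε (v / (x + ε) ^ n)
      = (x + ε) ^ n * (v / (x + ε) ^ n * regInv α ε (v / (x + ε) ^ n)) := by field_simp
  have h3 := hh.lower y hy
  unfold rotRate
  rw [le_div_iff₀ hden, h2]
  have h4 : M * v ^ 2 / hi ≤ (x + ε) ^ n * (v / (x + ε) ^ n * regInv α ε (v / (x + ε) ^ n)) := by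
    calc M * v ^ 2 / hi ≤ M * v ^ 2 / (x + ε) ^ n := by gcongr
      _ = (x + ε) ^ n * (M * (v / (x + ε) ^ n) ^ 2) := by field_simp
      _ ≤ _ := by gcongr
  have h5 : lo * (c * y ^ 2) ≤ (x + ε) ^ n * (y * h y) := by
    have := hh.c_pos
    gcongr
  have h6 : a * M / hi * ((a * y) ^ 2 + v ^ 2) = a * (M * v ^ 2 / hi + lo * (c * y ^ 2)) := by
    have : a * M / hi * ((a * y) ^ 2 + v ^ 2)
      = a * (M * v ^ 2 / hi + (a ^ 2 * M) * y ^ 2 / hi) := by ring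
    rw [this, haM]; field_simp
  rw [h6]
  gcongr

theorem rotRate_le {α ε : ℝ} {n : ℕ} {h : ℝ → ℝ} {x y v C K c η S hi m : ℝ} (hα : 0 < α)
    (hα1 : α < 1) (hh : IsForce h C K c η) (hx : 0 < x + ε)
    (hwhi : (x + ε) ^ n ≤ hi) (hS : |v / (x + ε) ^ n| ≤ S) (hy : |y| ≤ η)
    (hm : 0 < m) (hne : m ≤ y ^ 2 + v ^ 2) :
    rotRate α ε n h 1 x y v ≤ hi * (S * S ^ α + η * K) / m := by
  have hw : 0 < (x + ε) ^ n := pow_pos hx n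
  have hhi : 0 < hi := hw.trans_le hwhi
  have h2 : v * regInv α ε (v / (x + ε) ^ n)
      = (x + ε) ^ n * (v / (x + ε) ^ n * regInv α ε (v / (x + ε) ^ n)) := by field_simp
  have hS0 : 0 ≤ S := (abs_nonneg _).trans hS
  have h3 : v / (x + ε) ^ n * regInv α ε (v / (x + ε) ^ n) ≤ S * S ^ α := by
    refine (le_abs_self _).trans ?_
    rw [abs_mul]
    gcongr
    refine (abs_regInv_le hα hα1 _).trans ?_
    gcongr
  have h4 : y * h y ≤ η * K := by
    refine (le_abs_self _).trans ?_
    rw [abs_mul]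
    have := hh.bdd y
    have := hh.η_pos
    gcongr
  have h5 := mul_regInv_nonneg α ε (v / (x + ε) ^ n)
  have h6 := hh.sign y
  unfold rotRate
  rw [h2, one_mul, one_mul, ← mul_add]
  have h7 : 0 ≤ S * S ^ α + η * K := by linarith
  gcongr

theorem polar_identity {a Y V s k ψ g : ℝ} (hd : (a * Y) ^ 2 + V ^ 2 ≠ 0) :
    (2 * (a * Y * s + V * k) *
      (a * ψ * s + a * Y * (k * (a * (V * ψ + Y * g) / ((a * Y) ^ 2 + V ^ 2))) +
        (-g * k + V * (-s * (a * (V * ψ + Y * g) / ((a * Y) ^ 2 + V ^ 2))))) *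
      ((a * Y) ^ 2 + V ^ 2) -
      (a * Y * s + V * k) ^ 2 * (2 * (a * Y) * (a * ψ) + 2 * V * -g)) /
      ((a * Y) ^ 2 + V ^ 2) ^ 2 = 0 := by
  rw [div_eq_zero_iff]
  left
  have hq : a * (V * ψ + Y * g) / ((a * Y) ^ 2 + V ^ 2) * ((a * Y) ^ 2 + V ^ 2) =
      a * (V * ψ + Y * g) := div_mul_cancel₀ _ hd
  generalize a * (V * ψ + Y * g) / ((a * Y) ^ 2 + V ^ 2) = q at *
  linear_combination 2 * (a * Y * s + V * k) * (a * Y * k - V * s) * hq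

namespace RegSol

variable {α ε : ℝ} {n : ℕ} {h : ℝ → ℝ} {A B C K c η : ℝ} {y v : ℝ → ℝ}

theorem regEnergy_left (hs : RegSol α ε n h A B y v) :
    regEnergy α ε n h y v A = forcePot h (y A) := by
  simp [regEnergy, hs.v_left, regPot]

theorem y_bounds (hs : RegSol α ε n h A B y v) (hα : 0 < α) (hα1 : α < 1) (hA : 0 ≤ A)
    (hε : 0 < ε) (hh : IsForce h C K c η) (hd : C * (y A) ^ 2 < c * η ^ 2)
    {x : ℝ} (hx : x ∈ Icc A B) : |y x| ≤ η ∧ c * (y x) ^ 2 ≤ C * (y A) ^ 2 := by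
  have h1 := hs.antitoneOn_regEnergy hα hA hε hh (left_mem_Icc.2 (hx.1.trans hx.2)) hx hx.1
  rw [hs.regEnergy_left] at h1
  have h2 := hh.forcePot_le (y A)
  have h3 := hh.le_forcePot (y x)
  have h4 := regPot_nonneg hα hα1 hε (v x / (x + ε) ^ n)
  unfold regEnergy at h1
  have h5 : |y x| ≤ η := by
    by_contra hcon
    rw [min_eq_right (not_le.1 hcon).le] at h3
    linarith
  refine ⟨h5, ?_⟩
  rw [min_eq_left h5, sq_abs] at h3
  linarith

theorem abs_y_sub_le (hs : RegSol α ε n h A B y v) (hα : 0 < α) (hα1 : α < 1) (hA : 0 ≤ A)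
    (hε : 0 < ε) (hh : IsForce h C K c η) {x x' : ℝ} (hx : x ∈ Icc A B) (hx' : x' ∈ Icc A B) :
    |y x' - y x| ≤ (K * (B - A)) ^ α * |x' - x| := by
  refine (convex_Icc A B).norm_image_sub_le_of_norm_hasDerivWithin_le (fun t ht => hs.hy t ht)
    (fun t ht => ?_) hx hx'
  refine (abs_regInv_le hα hα1 _).trans ?_
  have := hs.abs_slope_le hA hε (fun x _ => hh.bdd (y x)) ht
  gcongr

theorem exists_le_sq_add_sq (hα : 0 < α) (hα1 : α < 1) (hA : 0 ≤ A) (hAB : A < B)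
    (hh : IsForce h C K c η) {d : ℝ} (hd : 0 < d) :
    ∃ m > 0, ∀ ε > 0, ε ≤ 1 → ∀ y v, RegSol α ε n h A B y v → y A = d →
      ∀ x ∈ Icc A B, m ≤ (y x) ^ 2 + (v x) ^ 2 := by
  set D := (K * (B - A)) ^ α with hD
  have hK := hh.K_nonneg
  have hc := hh.c_pos
  have hC := hh.C_pos
  have hη := hh.η_pos
  have hBA : 0 < B - A := by linarith
  have hD0 : 0 ≤ D := by positivity
  set τ := min (d / (2 * (D + 1))) (B - A) with hτ
  have hτ0 : 0 < τ := lt_min (by positivity) hBA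
  have hB1 : 0 < B + 1 := by linarith
  set e := c * (min (d / 2) η) ^ 2 / 2 * (τ ^ n / (B + 1) ^ n) ^ 2 with he
  have hmin : 0 < min (d / 2) η := lt_min (by linarith) hη
  have he0 : 0 < e := by positivity
  refine ⟨min (d ^ 2 / 4) (min (e / C) ((τ ^ n) ^ 2 * (e / 2) ^ (1 / ((α + 1) / 2)))),
    lt_min (by positivity) (lt_min (by positivity) (by positivity)), ?_⟩
  intro ε hε hε1 y v hs hyA x hx
  have hAm : A ∈ Icc A B := left_mem_Icc.2 hAB.le
  have hnear : ∀ x ∈ Icc A B, x ≤ A + τ → d / 2 ≤ y x := by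
    intro x hx hxτ
    have h1 := hs.abs_y_sub_le hα hα1 hA hε hh hAm hx
    rw [hyA, abs_of_nonneg (by linarith [hx.1] : 0 ≤ x - A), ← hD] at h1
    have h2 : D * (x - A) ≤ d / 2 := by
      have h3 : x - A ≤ d / (2 * (D + 1)) := (by linarith : x - A ≤ τ).trans (min_le_left _ _)
      rw [le_div_iff₀ (by positivity)] at h3
      nlinarith [hx.1]
    linarith [neg_abs_le (y x - d)]
  rcases le_total x (A + τ) with hxτ | hxτ
  · refine (min_le_left _ _).trans ?_
    have := hnear x hx hxτ
    nlinarith [sq_nonneg (v x)]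
  have hτm : A + τ ∈ Icc A B := ⟨by linarith, by linarith [min_le_right (d / (2 * (D + 1))) (B - A)]⟩
  have hmono := hs.monotoneOn_regEnergy_mul hα hα1 hA hε hh hτm hx hxτ
  simp only at hmono
  have hw1 : τ ^ n ≤ (A + τ + ε) ^ n := by gcongr; linarith
  have hw2 : (x + ε) ^ n ≤ (B + 1) ^ n := by
    have : 0 ≤ x + ε := by linarith [hx.1]
    gcongr
    exact hx.2
  have hw3 : τ ^ n ≤ (x + ε) ^ n := by gcongr; linarith
  have hw : 0 < (x + ε) ^ n := (pow_pos hτ0 n).trans_le hw3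
  have hE1 : c * (min (d / 2) η) ^ 2 / 2 ≤ regEnergy α ε n h y v (A + τ) := by
    have h1 := hh.le_forcePot (y (A + τ))
    have h2 := regPot_nonneg hα hα1 hε (v (A + τ) / (A + τ + ε) ^ n)
    have h3 : min (d / 2) η ≤ min |y (A + τ)| η :=
      min_le_min_right _ ((hnear _ hτm le_rfl).trans (le_abs_self _))
    have h4 : c * (min (d / 2) η) ^ 2 / 2 ≤ c * (min |y (A + τ)| η) ^ 2 / 2 := by gcongr
    unfold regEnergy
    linarith
  have hE : e ≤ regEnergy α ε n h y v x := by
    have h1 : c * (min (d / 2) η) ^ 2 / 2 * (τ ^ n) ^ 2 ≤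
        regEnergy α ε n h y v (A + τ) * ((A + τ + ε) ^ n) ^ 2 := by
      have : 0 ≤ regEnergy α ε n h y v (A + τ) := le_trans (by positivity) hE1
      gcongr
    have h0 : 0 ≤ regEnergy α ε n h y v x :=
      add_nonneg (regPot_nonneg hα hα1 hε _) (hh.forcePot_nonneg _)
    have h2 : regEnergy α ε n h y v x * ((x + ε) ^ n) ^ 2 ≤
        regEnergy α ε n h y v x * ((B + 1) ^ n) ^ 2 := by gcongr
    rw [he, div_pow, ← mul_div_assoc, div_le_iff₀ (by positivity)]
    linarith
  refine (min_le_right _ _).trans ?_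
  have hE2 : e ≤ ((v x / (x + ε) ^ n) ^ 2) ^ ((α + 1) / 2) + C * (y x) ^ 2 / 2 :=
    hE.trans (add_le_add (regPot_le hα hα1 _) (hh.forcePot_le _))
  rcases le_total (e / 2) (C * (y x) ^ 2 / 2) with hcase | hcase
  · refine (min_le_left _ _).trans ?_
    have : e / C ≤ (y x) ^ 2 := by rw [div_le_iff₀ hC]; linarith
    nlinarith [sq_nonneg (v x)]
  · refine (min_le_right _ _).trans ?_
    have h1 : e / 2 ≤ ((v x / (x + ε) ^ n) ^ 2) ^ ((α + 1) / 2) := by linarith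
    have h2 : (e / 2) ^ (1 / ((α + 1) / 2)) ≤ (v x / (x + ε) ^ n) ^ 2 := by
      have := Real.rpow_le_rpow (z := 1 / ((α + 1) / 2)) (by positivity) h1 (by positivity)
      rwa [← Real.rpow_mul (sq_nonneg _), mul_one_div_cancel (by positivity), Real.rpow_one] at this
    have h3 : (τ ^ n) ^ 2 * (e / 2) ^ (1 / ((α + 1) / 2)) ≤
        ((x + ε) ^ n) ^ 2 * (v x / (x + ε) ^ n) ^ 2 := by gcongr
    have h4 : ((x + ε) ^ n) ^ 2 * (v x / (x + ε) ^ n) ^ 2 = (v x) ^ 2 := by field_simp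
    nlinarith [sq_nonneg (y x)]

theorem v_eq_zero_of_sin_eq_zero (hs : RegSol α ε n h A B y v)
    (hne : ∀ x ∈ Icc A B, 0 < (y x) ^ 2 + (v x) ^ 2) {a : ℝ} (ha : 0 < a) {r : ℝ → ℝ}
    (hrc : Continuous r) (hr : ∀ x ∈ Icc A B, r x = rotRate α ε n h a x (y x) (v x))
    {x₀ : ℝ} (hx₀ : x₀ ∈ Icc A B) (hsin : Real.sin (∫ t in A..x₀, r t) = 0) : v x₀ = 0 := by
  set Θ : ℝ → ℝ := fun x => ∫ t in A..x, r t with hΘ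
  have hΘd : ∀ x, HasDerivAt Θ (r x) x := fun x =>
    intervalIntegral.integral_hasDerivAt_right (hrc.intervalIntegrable _ _)
      hrc.aestronglyMeasurable.stronglyMeasurableAtFilter hrc.continuousAt
  have hden : ∀ x ∈ Icc A B, 0 < (a * y x) ^ 2 + (v x) ^ 2 := by
    intro x hx
    have := hne x hx
    rcases eq_or_ne (v x) 0 with hv | hv
    · have hy0 : y x ≠ 0 := by intro h0; simp [h0, hv] at this
      positivity
    · positivity
  set Q : ℝ → ℝ := fun x => a * y x * Real.sin (Θ x) + v x * Real.cos (Θ x) with hQ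
  set W : ℝ → ℝ := fun x => Q x ^ 2 / ((a * y x) ^ 2 + (v x) ^ 2) with hW
  have hWd : ∀ x ∈ Icc A B, HasDerivWithinAt W 0 (Icc A B) x := by
    intro x hx
    have hy := (hs.hy x hx).const_mul a
    have hv := hs.hv x hx
    have hQd := (hy.mul (hΘd x).sin.hasDerivWithinAt).add
      (hv.mul (hΘd x).cos.hasDerivWithinAt)
    have hWd := (hQd.fun_pow 2).div ((hy.fun_pow 2).add (hv.fun_pow 2)) (hden x hx).ne'
    refine hWd.congr_deriv ?_
    have hd := (hden x hx).ne'
    rw [hr x hx, rotRate,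
      show (x + ε) ^ n * (y x * h (y x)) = y x * ((x + ε) ^ n * h (y x)) by ring]
    simp only [Pi.add_apply, Pi.mul_apply, Nat.cast_ofNat, Nat.add_one_sub_one, pow_one]
    generalize Real.sin (Θ x) = s
    generalize Real.cos (Θ x) = k
    generalize regInv α ε (v x / (x + ε) ^ n) = ψ
    generalize (x + ε) ^ n * h (y x) = g at *
    have hd' : (a * y x) ^ 2 + v x ^ 2 ≠ 0 := hd
    generalize (y x) = Y at *
    generalize (v x) = V at *
    exact polar_identity hd'
  have hconst := constant_of_has_deriv_right_zero
    (fun x hx => (hWd x hx).continuousWithinAt) (fun x hx =>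
      (hWd x ⟨hx.1, hx.2.le⟩).mono_of_mem_nhdsWithin (Icc_mem_nhdsGE_of_mem hx)) x₀ hx₀
  have hWA : W A = 0 := by simp [hW, hQ, hΘ, hs.v_left]
  rw [hWA] at hconst
  have hQ0 : Q x₀ = 0 := by
    rcases div_eq_zero_iff.1 hconst with h0 | h0
    · exact pow_eq_zero_iff two_ne_zero |>.1 h0
    · exact absurd h0 (hden x₀ hx₀).ne'
  have hcos : Real.cos (Θ x₀) ≠ 0 := by
    intro h0
    have := Real.sin_sq_add_cos_sq (Θ x₀)
    rw [h0, show Real.sin (Θ x₀) = 0 from hsin] at this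
    norm_num at this
  simp only [hQ] at hQ0
  rw [show Real.sin (Θ x₀) = 0 from hsin, mul_zero, zero_add] at hQ0
  exact (mul_eq_zero.1 hQ0).resolve_right hcos

end RegSol

theorem abs_clamp_le {S : ℝ} (hS : 0 ≤ S) (s : ℝ) : |max (-S) (min S s)| ≤ S :=
  abs_le.2 ⟨le_max_left _ _, max_le (by linarith) (min_le_left _ _)⟩

theorem clamp_eq_self {S s : ℝ} (hs : |s| ≤ S) : max (-S) (min S s) = s := by
  rw [min_eq_right (abs_le.1 hs).2, max_eq_right (abs_le.1 hs).1]

theorem abs_clamp_sub_clamp_le (S s t : ℝ) :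
    |max (-S) (min S s) - max (-S) (min S t)| ≤ |s - t| := by
  have h1 := abs_max_sub_max_le_max (-S) (min S s) (-S) (min S t)
  have h2 := abs_min_sub_min_le_max S s S t
  rw [sub_self, abs_zero] at h1 h2
  exact h1.trans (max_le (abs_nonneg _) (h2.trans (max_le (abs_nonneg _) le_rfl)))

theorem exists_lipschitz_regInv {α ε : ℝ} (hε : 0 < ε) (S : ℝ) : ∃ L ≥ 0, ∀ s t, |s| ≤ S → |t| ≤ S →
    |regInv α ε s - regInv α ε t| ≤ L * |s - t| := by
  obtain ⟨L, hL⟩ := (contDiff_regInv (α := α) hε).contDiffOn.exists_lipschitzOnWith (s := Icc (-S) S)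
    one_ne_zero (convex_Icc _ _) isCompact_Icc
  exact ⟨L, L.2, fun s t hs ht => hL.dist_le_mul s (abs_le.1 hs) t (abs_le.1 ht)⟩

/-- The solutions of the regularised system depend continuously on the initial value. -/
theorem exists_flow_regSol {α ε : ℝ} {n : ℕ} {h : ℝ → ℝ} {A B C K c η : ℝ} (hα : 0 < α)
    (hα1 : α < 1) (hA : 0 ≤ A) (hAB : A < B) (hε : 0 < ε) (hh : IsForce h C K c η) :
    ∃ Y V : ℝ → ℝ → ℝ, (∀ d ∈ Icc (-1 : ℝ) 1, RegSol α ε n h A B (Y d) (V d) ∧ Y d A = d) ∧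
      ContinuousOn (fun z : ℝ × ℝ => Y z.1 z.2) (Icc (-1) 1 ×ˢ Icc A B) ∧
      ContinuousOn (fun z : ℝ × ℝ => V z.1 z.2) (Icc (-1) 1 ×ˢ Icc A B) := by
  set S := K * (B - A) with hS
  have hK := hh.K_nonneg
  have hC := hh.C_pos
  have hBA : 0 < B - A := by linarith
  have hS0 : 0 ≤ S := by positivity
  obtain ⟨L, hL0, hL⟩ := exists_lipschitz_regInv (α := α) hε S
  set F : ℝ → ℝ × ℝ → ℝ × ℝ := fun x z =>
    (regInv α ε (max (-S) (min S (z.2 / (x + ε) ^ n))), -((x + ε) ^ n * h z.1)) with hF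
  have hBε : 0 ≤ B + ε := by linarith
  set M : ℝ := S ^ α + (B + ε) ^ n * K with hM
  have hM0 : 0 ≤ M := by positivity
  set Λ : ℝ := L / ε ^ n + (B + ε) ^ n * C with hΛ
  have hΛ0 : 0 ≤ Λ := by positivity
  have hpl : IsPicardLindelof F (⟨A, left_mem_Icc.2 hAB.le⟩ : Icc A B) ((0, 0) : ℝ × ℝ)
      ⟨1 + M * (B - A), by positivity⟩ 1 ⟨M, hM0⟩ ⟨Λ, hΛ0⟩ := by
    refine ⟨fun t ht => LipschitzOnWith.of_dist_le_mul fun z _ w _ => ?_, fun z _ => ?_,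
      fun t ht z _ => ?_, ?_⟩
    · have ht0 : ε ≤ t + ε := by linarith [ht.1]
      have ht1 : t + ε ≤ B + ε := by linarith [ht.2]
      have h1 : |z.1 - w.1| ≤ dist z w := by rw [Prod.dist_eq]; exact le_max_left _ _
      have h2 : |z.2 - w.2| ≤ dist z w := by rw [Prod.dist_eq]; exact le_max_right _ _
      rw [Prod.dist_eq (x := F t z)]
      have e1 : dist (F t z).1 (F t w).1 ≤ L / ε ^ n * dist z w := by
        simp only [hF, Real.dist_eq]
        refine (hL _ _ (abs_clamp_le hS0 _) (abs_clamp_le hS0 _)).trans ?_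
        calc L * _ ≤ L * |z.2 / (t + ε) ^ n - w.2 / (t + ε) ^ n| := by
              exact mul_le_mul_of_nonneg_left (abs_clamp_sub_clamp_le _ _ _) hL0
          _ = L * (|z.2 - w.2| / (t + ε) ^ n) := by
              rw [← sub_div, abs_div, abs_of_pos (pow_pos (hε.trans_le ht0) n)]
          _ ≤ L * (dist z w / ε ^ n) := by gcongr
          _ = _ := by ring
      have e2 : dist (F t z).2 (F t w).2 ≤ (B + ε) ^ n * C * dist z w := by
        simp only [hF, Real.dist_eq]
        rw [← neg_sub_neg, neg_neg, neg_neg, ← mul_sub, abs_mul,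
          abs_of_pos (pow_pos (hε.trans_le ht0) n), mul_assoc]
        have : |h w.1 - h z.1| ≤ C * dist z w := by
          rw [abs_sub_comm]
          exact (hh.lip _ _).trans (by gcongr)
        have := hε.trans_le ht0
        gcongr
      have e3 : 0 ≤ L / ε ^ n * dist z w := by positivity
      have e4 : 0 ≤ (B + ε) ^ n * C * dist z w := by positivity
      change _ ≤ Λ * dist z w
      rw [hΛ, add_mul]
      exact max_le (by linarith) (by linarith)
    · have hc1 : ContinuousOn (fun t : ℝ => z.2 / (t + ε) ^ n) (Icc A B) :=
        ContinuousOn.div (by fun_prop) (by fun_prop)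
          fun x hx => (pow_pos (by linarith [hx.1]) n).ne'
      refine ContinuousOn.prodMk ((continuous_regInv hα hα1).comp_continuousOn ?_) (by fun_prop)
      exact ContinuousOn.sup continuousOn_const (ContinuousOn.inf continuousOn_const hc1)
    · have ht1 : t + ε ≤ B + ε := by linarith [ht.2]
      have ht0 : 0 ≤ t + ε := by linarith [ht.1]
      have e3 : 0 ≤ S ^ α := by positivity
      have e4 : 0 ≤ (B + ε) ^ n * K := by positivity
      change ‖F t z‖ ≤ M
      rw [Prod.norm_def]
      refine max_le ?_ ?_
      · refine ((abs_regInv_le hα hα1 _).trans ?_).trans (by linarith : S ^ α ≤ M)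
        have := abs_clamp_le hS0 (z.2 / (t + ε) ^ n)
        gcongr
      · refine le_trans ?_ (by linarith : (B + ε) ^ n * K ≤ M)
        simp only [hF, norm_neg, norm_mul, Real.norm_eq_abs]
        rw [abs_of_nonneg (by positivity : (0 : ℝ) ≤ (t + ε) ^ n)]
        have := hh.bdd z.1
        gcongr
    · change M * max (B - A) (A - A) ≤ 1 + M * (B - A) - 1
      rw [sub_self, max_eq_left hBA.le]
      linarith
  obtain ⟨Φ, hΦ, hΦc⟩ := hpl.exists_forall_mem_closedBall_eq_hasDerivWithinAt_continuousOn
  have hmem : ∀ d ∈ Icc (-1 : ℝ) 1,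
      ((d, 0) : ℝ × ℝ) ∈ Metric.closedBall ((0, 0) : ℝ × ℝ) (1 : NNReal) := by
    intro d hd
    rw [mem_closedBall_iff_norm, Prod.norm_def]
    simpa using abs_le.2 hd
  have hcomp : ContinuousOn (fun z : ℝ × ℝ => Φ ((z.1, 0), z.2)) (Icc (-1) 1 ×ˢ Icc A B) :=
    hΦc.comp (by fun_prop) fun z hz => ⟨hmem _ hz.1, hz.2⟩
  refine ⟨fun d x => (Φ ((d, 0), x)).1, fun d x => (Φ ((d, 0), x)).2, fun d hd => ?_,
    hcomp.fst, hcomp.snd⟩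
  obtain ⟨hi, hD⟩ := hΦ _ (hmem d hd)
  have hv : ∀ x ∈ Icc A B, HasDerivWithinAt (fun x => (Φ ((d, 0), x)).2)
      (-((x + ε) ^ n * h (Φ ((d, 0), x)).1)) (Icc A B) x := fun x hx => (hD x hx).snd
  have hvA : (Φ ((d, 0), A)).2 = 0 := congrArg Prod.snd hi
  refine ⟨⟨fun x hx => ?_, hv, hvA⟩, congrArg Prod.fst hi⟩
  refine HasDerivWithinAt.congr_deriv (f' := (F x (Φ ((d, 0), x))).1) ((hD x hx).fst) ?_
  simp only [hF]
  rw [clamp_eq_self]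
  have h0 : 0 < (x + ε) ^ n := pow_pos (by linarith [hx.1]) n
  rw [abs_div, abs_of_pos h0, div_le_iff₀ h0]
  refine (abs_le_of_hasDerivWithinAt (y := fun x => (Φ ((d, 0), x)).1) (k := K)
    hv hvA hA hε.le (fun x _ => hh.bdd _) hx).trans ?_
  rw [mul_comm, hS]
  gcongr
  exact hx.2

namespace RegSol

variable {α : ℝ} {n : ℕ} {h : ℝ → ℝ} {A B C K c η : ℝ}

theorem exists_rotRate_le (hα : 0 < α) (hα1 : α < 1) (hA : 0 ≤ A) (hAB : A < B)
    (hh : IsForce h C K c η) {δ : ℝ} (hδ : 0 < δ) (hδη : C * δ ^ 2 < c * η ^ 2) :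
    ∃ G, ∀ ε > 0, ε ≤ 1 → ∀ y v, RegSol α ε n h A B y v → y A = δ →
      ∀ x ∈ Icc A B, rotRate α ε n h 1 x (y x) (v x) ≤ G := by
  obtain ⟨m, hm, hmle⟩ := exists_le_sq_add_sq (n := n) hα hα1 hA hAB hh hδ
  refine ⟨(B + 1) ^ n * (K * (B - A) * (K * (B - A)) ^ α + η * K) / m, ?_⟩
  intro ε hε hε1 y v hs hyA x hx
  have hx0 : 0 < x + ε := by linarith [hx.1]
  refine rotRate_le hα hα1 hh hx0 ?_ (hs.abs_slope_le hA hε (fun x _ => hh.bdd (y x)) hx)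
    (hs.y_bounds hα hα1 hA hε hh (by rwa [hyA]) hx).1 hm (hmle ε hε hε1 y v hs hyA x hx)
  gcongr
  exact hx.2

theorem exists_le_rotRate (hα : 0 < α) (hα1 : α < 1) (hA : 0 ≤ A) {τ : ℝ} (hτ : 0 < τ)
    (hτB : A + τ ≤ B) (hh : IsForce h C K c η) {δ : ℝ} (hδ : 0 < δ)
    (hδη : C * δ ^ 2 < c * η ^ 2) {G : ℝ} (hG : 0 < G) :
    ∃ δ' > 0, δ' ≤ δ ∧ ∃ κ > 0, κ ≤ 1 ∧ ∃ a > 0, ∀ ε > 0, ε ≤ κ → ∀ y v,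
      RegSol α ε n h A B y v → y A = δ' → ∀ x ∈ Icc (A + τ) B,
        G ≤ rotRate α ε n h a x (y x) (v x) := by
  have hc := hh.c_pos
  have hC := hh.C_pos
  have hBA : 0 < B - A := by linarith
  have hB1 : 0 < B + 1 := by linarith
  set lo := τ ^ n with hlo
  set hi := (B + 1) ^ n with hhi
  have hlo0 : 0 < lo := by positivity
  have hhi0 : 0 < hi := by positivity
  set X := G ^ 2 * hi / (c * lo) with hX
  have hX0 : 0 < X := by positivity
  set κ := min (√(X ^ (2 / (α - 1)) / 2)) 1 with hκ
  have hκ0 : 0 < κ := lt_min (by positivity) one_pos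
  set M := (2 * κ ^ 2) ^ ((α - 1) / 2) with hM
  have hM0 : 0 < M := by positivity
  have hXM : X ≤ M := by
    have h1 : 2 * κ ^ 2 ≤ X ^ (2 / (α - 1)) := by
      have h2 : κ ^ 2 ≤ √(X ^ (2 / (α - 1)) / 2) ^ 2 := by
        gcongr
        exact min_le_left _ _
      rw [Real.sq_sqrt (by positivity)] at h2
      linarith
    have h2 := Real.rpow_le_rpow_of_nonpos (by positivity) h1
      (by linarith : (α - 1) / 2 ≤ 0)
    rwa [← Real.rpow_mul hX0.le, show 2 / (α - 1) * ((α - 1) / 2) = 1 by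
      have : α - 1 ≠ 0 := by linarith
      field_simp, Real.rpow_one] at h2
  set ρ := √(C / c) with hρ
  have hρ0 : 0 < ρ := by positivity
  set δ' := min δ (κ / (C * ρ * (B - A))) with hδ'
  have hδ'0 : 0 < δ' := lt_min hδ (by positivity)
  have hδ'δ : δ' ≤ δ := min_le_left _ _
  set a := √(c * lo * hi / M) with ha
  have ha0 : 0 < a := by positivity
  have haM : a ^ 2 * M = c * lo * hi := by
    rw [ha, Real.sq_sqrt (by positivity)]; field_simp
  refine ⟨δ', hδ'0, hδ'δ, κ, hκ0, min_le_right _ _, a, ha0, ?_⟩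
  intro ε hε hεκ y v hs hyA x hx
  have hxm : x ∈ Icc A B := ⟨by linarith [hx.1], hx.2⟩
  have hε1 : ε ≤ 1 := hεκ.trans (min_le_right _ _)
  have hx0 : 0 < x + ε := by linarith [hxm.1]
  have hd : C * (y A) ^ 2 < c * η ^ 2 := by
    rw [hyA]
    refine lt_of_le_of_lt ?_ hδη
    gcongr
  have hyb : ∀ t ∈ Icc A B, |h (y t)| ≤ C * (ρ * δ') := by
    intro t ht
    refine (hh.abs_le _).trans ?_
    gcongr
    refine abs_le_of_sq_le_sq ?_ (by positivity)
    have := (hs.y_bounds hα hα1 hA hε hh hd ht).2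
    rw [hyA] at this
    rw [mul_pow, hρ, Real.sq_sqrt (by positivity), div_mul_eq_mul_div, le_div_iff₀ hc]
    linarith
  have hslope : |v x / (x + ε) ^ n| ≤ κ := by
    refine (hs.abs_slope_le hA hε hyb hxm).trans ?_
    have : δ' ≤ κ / (C * ρ * (B - A)) := min_le_right _ _
    rw [le_div_iff₀ (by positivity)] at this
    linarith
  obtain ⟨m, hm, hmle⟩ := exists_le_sq_add_sq (n := n) (B := B) hα hα1 hA (by linarith) hh hδ'0
  refine le_trans ?_ (le_rotRate hh ha0 hM0 hx0 (lo := lo) (hi := hi) ?_ ?_ haM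
    (le_mul_regInv hα1 hε hεκ hslope) (hs.y_bounds hα hα1 hA hε hh hd hxm).1
    (hm.trans_le (hmle ε hε hε1 y v hs hyA x hxm)))
  · refine (pow_le_pow_iff_left₀ hG.le (by positivity) two_ne_zero).1 ?_
    have : (a * M / hi) ^ 2 = (a ^ 2 * M) * M / hi ^ 2 := by ring
    rw [this, haM]
    rw [hX, div_le_iff₀ (by positivity)] at hXM
    rw [le_div_iff₀ (by positivity)]
    nlinarith
  · rw [hlo]
    gcongr
    linarith [hx.1]
  · rw [hhi]
    gcongr
    exact hx.2

/-- Solutions of the regularised problem with small initial value and vanishing flux at `R`. -/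
theorem exists_shooting (hα : 0 < α) (hα1 : α < 1) (hA : 0 ≤ A) {R : ℝ} (hAR : A < R)
    (hRB : R ≤ B) (hh : IsForce h C K c η) {δ : ℝ} (hδ : 0 < δ) (hδ1 : δ ≤ 1)
    (hδη : C * δ ^ 2 < c * η ^ 2) :
    ∃ δ' > 0, ∃ κ > 0, ∀ ε > 0, ε ≤ κ → ∃ y v, RegSol α ε n h A B y v ∧
      y A ∈ Icc δ' δ ∧ v R = 0 := by
  have hAB : A < B := hAR.trans_le hRB
  obtain ⟨G, hG⟩ := exists_rotRate_le (n := n) hα hα1 hA hAB hh hδ hδη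
  set T := R - A with hT
  have hT0 : 0 < T := by linarith
  set G' := (|G| * T + π) / (T / 2) with hG'
  have hπ := Real.pi_pos
  obtain ⟨δ', hδ'0, hδ'δ, κ, hκ0, hκ1, a, ha0, hL⟩ := exists_le_rotRate (n := n) (B := B) hα hα1 hA
    (τ := T / 2) (by linarith) (by linarith) hh hδ hδη (G := G') (by positivity)
  refine ⟨δ', hδ'0, κ, hκ0, fun ε hε hεκ => ?_⟩
  have hε1 := hεκ.trans hκ1
  obtain ⟨Y, V, hYV, hYc, hVc⟩ := exists_flow_regSol (n := n) hα hα1 hA hAB hε hh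
  set D : ℝ → ℝ := fun t => δ' + t * (δ - δ') with hD
  set a' : ℝ → ℝ := fun t => a + t * (1 - a) with ha'
  have hDm : ∀ t ∈ Icc (0 : ℝ) 1, D t ∈ Icc δ' δ := fun t ht => by
    constructor
    · simp only [hD]; nlinarith [ht.1]
    · simp only [hD]; nlinarith [ht.2]
  have hDm' : ∀ t ∈ Icc (0 : ℝ) 1, D t ∈ Icc (-1 : ℝ) 1 := fun t ht =>
    ⟨by linarith [(hDm t ht).1], (hDm t ht).2.trans hδ1⟩
  have ha'0 : ∀ t ∈ Icc (0 : ℝ) 1, 0 < a' t := fun t ht => by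
    simp only [ha']
    rcases eq_or_lt_of_le ht.2 with rfl | h1
    · linarith
    · nlinarith [ht.1]
  have hne : ∀ t ∈ Icc (0 : ℝ) 1, ∀ x ∈ Icc A B, 0 < (Y (D t) x) ^ 2 + (V (D t) x) ^ 2 := by
    intro t ht x hx
    obtain ⟨m, hm, hmle⟩ := exists_le_sq_add_sq (n := n) hα hα1 hA hAB hh
      (hδ'0.trans_le (hDm t ht).1)
    obtain ⟨h1, h2⟩ := hYV _ (hDm' t ht)
    exact hm.trans_le (hmle ε hε hε1 _ _ h1 h2 x hx)
  set ρ : ℝ × ℝ → ℝ := fun z =>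
    rotRate α ε n h (a' z.1) z.2 (Y (D z.1) z.2) (V (D z.1) z.2) with hρ
  have hρc : ContinuousOn ρ (Icc 0 1 ×ˢ Icc A B) := by
    have hmap : MapsTo (fun z : ℝ × ℝ => (D z.1, z.2)) (Icc 0 1 ×ˢ Icc A B)
        (Icc (-1) 1 ×ˢ Icc A B) := fun z hz => ⟨hDm' _ hz.1, hz.2⟩
    have hDc : ContinuousOn (fun z : ℝ × ℝ => (D z.1, z.2)) (Icc 0 1 ×ˢ Icc A B) := by
      simp only [hD]; fun_prop
    have hY := hYc.comp hDc hmap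
    have hV := hVc.comp hDc hmap
    have hac : ContinuousOn (fun z : ℝ × ℝ => a' z.1) (Icc 0 1 ×ˢ Icc A B) := by
      simp only [ha']; fun_prop
    have hw : ContinuousOn (fun z : ℝ × ℝ => (z.2 + ε) ^ n) (Icc 0 1 ×ˢ Icc A B) := by fun_prop
    have hq := (continuous_regInv (ε := ε) hα hα1).comp_continuousOn
      (hV.div hw fun z hz => (pow_pos (by linarith [hz.2.1]) n).ne')
    refine (hac.mul ((hV.mul hq).add (hw.mul (hY.mul (hh.continuous.comp_continuousOn hY))))).div
      (((hac.mul hY).pow 2).add (hV.pow 2)) fun z hz => ?_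
    have h1 := hne _ hz.1 _ hz.2
    have h2 := ha'0 _ hz.1
    rcases eq_or_ne (V (D z.1) z.2) 0 with hv | hv
    · have hy0 : Y (D z.1) z.2 ≠ 0 := by intro h0; simp [h0, hv] at h1
      have : 0 < (a' z.1 * Y (D z.1) z.2) ^ 2 + V (D z.1) z.2 ^ 2 := by positivity
      exact this.ne'
    · have : 0 < (a' z.1 * Y (D z.1) z.2) ^ 2 + V (D z.1) z.2 ^ 2 := by positivity
      exact this.ne'
  set r : ℝ → ℝ → ℝ := fun t x =>
    ρ ((projIcc 0 1 zero_le_one t : Icc (0 : ℝ) 1), (projIcc A B hAB.le x : Icc A B)) with hr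
  have hrc : Continuous (Function.uncurry r) := by
    refine hρc.comp_continuous ?_ fun z => ⟨Subtype.coe_prop _, Subtype.coe_prop _⟩
    fun_prop
  have hreq : ∀ t ∈ Icc (0 : ℝ) 1, ∀ x ∈ Icc A B,
      r t x = rotRate α ε n h (a' t) x (Y (D t) x) (V (D t) x) := by
    intro t ht x hx
    simp only [hr, projIcc_of_mem zero_le_one ht, projIcc_of_mem hAB.le hx, hρ]
  have hrtc : ∀ t, Continuous (r t) := fun t => hrc.comp (by fun_prop : Continuous fun x => (t, x))
  have hΘc : Continuous fun t => ∫ x in A..R, r t x :=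
    intervalIntegral.continuous_parametric_intervalIntegral_of_continuous' hrc A R
  have h0m : (0 : ℝ) ∈ Icc (0 : ℝ) 1 := ⟨le_rfl, zero_le_one⟩
  have h1m : (1 : ℝ) ∈ Icc (0 : ℝ) 1 := ⟨zero_le_one, le_rfl⟩
  have hΘ1 : ∫ x in A..R, r 1 x ≤ |G| * T := by
    have : ∫ x in A..R, r 1 x ≤ ∫ x in A..R, |G| := by
      refine intervalIntegral.integral_mono_on hAR.le ((hrtc 1).intervalIntegrable _ _)
        (by simp) fun x hx => ?_
      have hx' : x ∈ Icc A B := ⟨hx.1, hx.2.trans hRB⟩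
      obtain ⟨h1, h2⟩ := hYV _ (hDm' 1 h1m)
      rw [hreq 1 h1m x hx', show a' 1 = 1 by simp [ha']]
      exact (hG ε hε hε1 _ _ h1 (by rw [h2]; simp [hD]) x hx').trans (le_abs_self _)
    rw [intervalIntegral.integral_const, smul_eq_mul, mul_comm] at this
    exact this
  have hΘ0 : |G| * T + π ≤ ∫ x in A..R, r 0 x := by
    obtain ⟨h1, h2⟩ := hYV _ (hDm' 0 h0m)
    rw [← intervalIntegral.integral_add_adjacent_intervals (b := A + T / 2)
      ((hrtc 0).intervalIntegrable _ _) ((hrtc 0).intervalIntegrable _ _)]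
    have i1 : 0 ≤ ∫ x in A..(A + T / 2), r 0 x := by
      refine intervalIntegral.integral_nonneg (by linarith) fun x hx => ?_
      rw [hreq 0 h0m x ⟨hx.1, by linarith [hx.2]⟩]
      exact rotRate_nonneg hh (ha'0 0 h0m) (by linarith [hx.1])
    have i2 : ∫ x in (A + T / 2)..R, G' ≤ ∫ x in (A + T / 2)..R, r 0 x := by
      refine intervalIntegral.integral_mono_on (by linarith) (by simp)
        ((hrtc 0).intervalIntegrable _ _) fun x hx => ?_
      rw [hreq 0 h0m x ⟨by linarith [hx.1], by linarith [hx.2]⟩, show a' 0 = a by simp [ha']]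
      exact hL ε hε hεκ _ _ h1 (by rw [h2]; simp [hD]) x ⟨hx.1, by linarith [hx.2]⟩
    rw [intervalIntegral.integral_const, smul_eq_mul, show R - (A + T / 2) = T / 2 by
      rw [hT]; ring, hG', mul_div_cancel₀ _ (by positivity)] at i2
    linarith
  set k : ℤ := ⌈(∫ x in A..R, r 1 x) / π⌉ with hk
  have hk1 : ∫ x in A..R, r 1 x ≤ k * π := by
    have := Int.le_ceil ((∫ x in A..R, r 1 x) / π)
    rwa [div_le_iff₀ hπ] at this
  have hk2 : k * π ≤ ∫ x in A..R, r 0 x := by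
    have := (Int.ceil_lt_add_one ((∫ x in A..R, r 1 x) / π)).le
    rw [← hk, div_add_one hπ.ne', le_div_iff₀ hπ] at this
    linarith
  obtain ⟨t, ht, htk⟩ := intermediate_value_Icc' zero_le_one hΘc.continuousOn ⟨hk1, hk2⟩
  obtain ⟨h1, h2⟩ := hYV _ (hDm' t ht)
  refine ⟨Y (D t), V (D t), h1, by rw [h2]; exact hDm t ht, ?_⟩
  refine h1.v_eq_zero_of_sin_eq_zero (hne t ht) (ha'0 t ht) (hrtc t) (hreq t ht) ⟨hAR.le, hRB⟩ ?_
  have htk' : ∫ x in A..R, r t x = k * π := htk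
  rw [htk', Real.sin_int_mul_pi]

end RegSol

/-- A uniformly bounded and uniformly Lipschitz sequence of curves has a convergent subsequence. -/
theorem exists_subseq_tendsto_of_lipschitz {E : Type*} [MetricSpace E] [ProperSpace E]
    {A B : ℝ} (hAB : A ≤ B) {F : ℕ → ℝ → E} {z : E} {M : ℝ} {L : NNReal}
    (hM : ∀ k, ∀ x ∈ Icc A B, F k x ∈ Metric.closedBall z M)
    (hL : ∀ k, LipschitzOnWith L (F k) (Icc A B)) :
    ∃ G : ℝ → E, ContinuousOn G (Icc A B) ∧ ∃ φ : ℕ → ℕ, StrictMono φ ∧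
      ∀ x ∈ Icc A B, Tendsto (fun k => F (φ k) x) atTop (𝓝 (G x)) := by
  have hlip : ∀ k, LipschitzWith L (fun x : Icc A B => F k x) := fun k => (hL k).to_restrict
  set b : ℕ → BoundedContinuousFunction (Icc A B) E := fun k =>
    BoundedContinuousFunction.mkOfCompact ⟨fun x => F k x, (hlip k).continuous⟩ with hb
  have hcomp := BoundedContinuousFunction.arzela_ascoli (Metric.closedBall z M)
    (isCompact_closedBall z M) (range b) (by
      rintro _ x ⟨k, rfl⟩
      exact hM k x x.2) (by
      refine (LipschitzWith.uniformEquicontinuous _ L ?_).equicontinuous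
      rintro ⟨_, k, rfl⟩
      exact hlip k)
  obtain ⟨g, -, φ, hφ, hg⟩ := hcomp.tendsto_subseq fun k => subset_closure (mem_range_self k)
  refine ⟨IccExtend hAB g, (g.continuous.Icc_extend' (h := hAB)).continuousOn, φ, hφ, fun x hx => ?_⟩
  have h1 : Tendsto (fun k => b (φ k) ⟨x, hx⟩) atTop (𝓝 (g ⟨x, hx⟩)) :=
    (BoundedContinuousFunction.tendsto_iff_tendstoUniformly.1 hg).tendsto_at _
  rw [IccExtend_of_mem hAB _ hx]
  exact h1

namespace RegSol

variable {α ε : ℝ} {n : ℕ} {h : ℝ → ℝ} {A B C K c η : ℝ} {y v : ℝ → ℝ}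

theorem abs_v_sub_le (hs : RegSol α ε n h A B y v) (hA : 0 ≤ A)
    (hε : 0 < ε) (hε1 : ε ≤ 1) (hh : IsForce h C K c η) {x x' : ℝ} (hx : x ∈ Icc A B)
    (hx' : x' ∈ Icc A B) : |v x' - v x| ≤ (B + 1) ^ n * K * |x' - x| := by
  refine (convex_Icc A B).norm_image_sub_le_of_norm_hasDerivWithin_le (fun t ht => hs.hv t ht)
    (fun t ht => ?_) hx hx'
  have h0 : 0 ≤ t + ε := by linarith [ht.1]
  rw [norm_neg, norm_mul, Real.norm_eq_abs, Real.norm_eq_abs, abs_of_nonneg (by positivity)]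
  have := hh.bdd (y t)
  have : 0 ≤ B + 1 := by linarith [ht.1, ht.2]
  gcongr
  exact ht.2

theorem y_eq_integral (hs : RegSol α ε n h A B y v) (hα : 0 < α) (hα1 : α < 1) (hA : 0 ≤ A)
    (hε : 0 < ε) {x : ℝ} (hx : x ∈ Icc A B) :
    y x = y A + ∫ t in A..x, regInv α ε (v t / (t + ε) ^ n) := by
  have hsub : Icc A x ⊆ Icc A B := Icc_subset_Icc le_rfl hx.2
  rw [intervalIntegral.integral_eq_sub_of_hasDerivAt_of_le hx.1 (hs.continuousOn_y.mono hsub)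
    (fun t ht => (hs.hy t ⟨ht.1.le, ht.2.le.trans hx.2⟩).hasDerivAt
      (Icc_mem_nhds ht.1 (ht.2.trans_le hx.2)))]
  · ring
  · refine ContinuousOn.intervalIntegrable ?_
    rw [uIcc_of_le hx.1]
    exact (continuous_regInv hα hα1).comp_continuousOn ((hs.continuousOn_slope hA hε).mono hsub)

theorem v_eq_integral (hs : RegSol α ε n h A B y v) (hh : IsForce h C K c η)
    {x : ℝ} (hx : x ∈ Icc A B) : v x = ∫ t in A..x, -((t + ε) ^ n * h (y t)) := by
  have hsub : Icc A x ⊆ Icc A B := Icc_subset_Icc le_rfl hx.2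
  rw [intervalIntegral.integral_eq_sub_of_hasDerivAt_of_le hx.1 (hs.continuousOn_v.mono hsub)
    (fun t ht => (hs.hv t ⟨ht.1.le, ht.2.le.trans hx.2⟩).hasDerivAt
      (Icc_mem_nhds ht.1 (ht.2.trans_le hx.2)))]
  · rw [hs.v_left, sub_zero]
  · refine ContinuousOn.intervalIntegrable ?_
    rw [uIcc_of_le hx.1]
    exact (ContinuousOn.mul (by fun_prop)
      (hh.continuous.comp_continuousOn (hs.continuousOn_y.mono hsub))).neg

/-- Solutions of the unregularised problem, in integral form, with vanishing flux at `R`. -/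
theorem exists_limit (hα : 0 < α) (hα1 : α < 1) (hA : 0 ≤ A) {R : ℝ} (hAR : A < R)
    (hRB : R ≤ B) (hh : IsForce h C K c η) {δ : ℝ} (hδ : 0 < δ) (hδ1 : δ ≤ 1)
    (hδη : C * δ ^ 2 < c * η ^ 2) :
    ∃ y v : ℝ → ℝ, ContinuousOn y (Icc A B) ∧ ContinuousOn v (Icc A B) ∧ 0 < y A ∧ y A ≤ δ ∧
      v R = 0 ∧ ∀ x ∈ Icc A B, |y x| ≤ η ∧ |v x| ≤ x ^ n * (K * (x - A)) ∧
        y x = y A + ∫ t in A..x, regInv α 0 (v t / t ^ n) ∧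
        v x = ∫ t in A..x, -(t ^ n * h (y t)) := by
  have hAB : A < B := hAR.trans_le hRB
  have hBA : 0 < B - A := by linarith
  have hB1 : 0 ≤ B + 1 := by linarith
  have hK := hh.K_nonneg
  have hη := hh.η_pos
  obtain ⟨δ', hδ', κ, hκ, hex⟩ := exists_shooting (n := n) hα hα1 hA hAR hRB hh hδ hδ1 hδη
  set e : ℕ → ℝ := fun k => min κ (1 / ((k : ℝ) + 1)) with he
  have he0 : ∀ k, 0 < e k := fun k => lt_min hκ (by positivity)
  have heκ : ∀ k, e k ≤ κ := fun k => min_le_left _ _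
  have he1 : ∀ k, e k ≤ 1 := fun k => (min_le_right _ _).trans (by
    rw [div_le_one (by positivity)]; linarith [Nat.cast_nonneg (α := ℝ) k])
  have het : Tendsto e atTop (𝓝 0) :=
    squeeze_zero (fun k => (he0 k).le) (fun k => min_le_right _ _)
      tendsto_one_div_add_atTop_nhds_zero_nat
  choose Y V hs hYA hVR using fun k => hex (e k) (he0 k) (heκ k)
  have hd : ∀ k, C * (Y k A) ^ 2 < c * η ^ 2 := fun k => by
    refine lt_of_le_of_lt ?_ hδη
    have := (hYA k).2
    have := hδ'.trans_le (hYA k).1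
    have := hh.C_pos
    gcongr
  have hYb : ∀ k, ∀ x ∈ Icc A B, |Y k x| ≤ η := fun k x hx =>
    ((hs k).y_bounds hα hα1 hA (he0 k) hh (hd k) hx).1
  have hVb : ∀ k, ∀ x ∈ Icc A B, |V k x| ≤ (x + e k) ^ n * (K * (x - A)) := fun k x hx =>
    (hs k).abs_v_le hA (he0 k).le (fun _ _ => hh.bdd _) hx
  set L : ℝ := (K * (B - A)) ^ α + (B + 1) ^ n * K with hL
  have hL1 : 0 ≤ (K * (B - A)) ^ α := by positivity
  have hL2 : 0 ≤ (B + 1) ^ n * K := by positivity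
  have hL0 : 0 ≤ L := by positivity
  obtain ⟨G, hGc, φ, hφ, hG⟩ := exists_subseq_tendsto_of_lipschitz (E := ℝ × ℝ) hAB.le
    (F := fun k x => (Y k x, V k x)) (z := 0) (M := η + (B + 1) ^ n * (K * (B - A)))
    (L := ⟨L, hL0⟩) (fun k x hx => by
      rw [mem_closedBall_zero_iff, Prod.norm_def]
      have h1 := hYb k x hx
      have h3 : 0 ≤ (B + 1) ^ n * (K * (B - A)) := by positivity
      have h2 : |V k x| ≤ (B + 1) ^ n * (K * (B - A)) := by
        refine (hVb k x hx).trans ?_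
        have : 0 ≤ x + e k := by linarith [hx.1, he0 k]
        have := he1 k
        have : 0 ≤ x - A := by linarith [hx.1]
        gcongr
        · exact hx.2
        · exact hx.2
      exact max_le (h1.trans (by linarith)) (h2.trans (by linarith)))
    (fun k => LipschitzOnWith.of_dist_le_mul fun x hx x' hx' => by
      rw [Prod.dist_eq]
      change max |Y k x - Y k x'| |V k x - V k x'| ≤ L * |x - x'|
      have h1 := (hs k).abs_y_sub_le hα hα1 hA (he0 k) hh hx' hx
      have h2 := (hs k).abs_v_sub_le hA (he0 k) (he1 k) hh hx' hx
      rw [hL]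
      refine max_le (h1.trans ?_) (h2.trans ?_) <;> gcongr <;> linarith)
  have hAm : A ∈ Icc A B := left_mem_Icc.2 hAB.le
  have hY : ∀ x ∈ Icc A B, Tendsto (fun k => Y (φ k) x) atTop (𝓝 (G x).1) := fun x hx =>
    (continuous_fst.tendsto _).comp (hG x hx)
  have hV : ∀ x ∈ Icc A B, Tendsto (fun k => V (φ k) x) atTop (𝓝 (G x).2) := fun x hx =>
    (continuous_snd.tendsto _).comp (hG x hx)
  have heφ := het.comp hφ.tendsto_atTop
  have hw : ∀ x : ℝ, Tendsto (fun k => (x + e (φ k)) ^ n) atTop (𝓝 (x ^ n)) := fun x => by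
    simpa using (tendsto_const_nhds.add heφ).pow n
  refine ⟨fun x => (G x).1, fun x => (G x).2, hGc.fst, hGc.snd,
    hδ'.trans_le (ge_of_tendsto' (hY A hAm) fun k => (hYA _).1),
    le_of_tendsto' (hY A hAm) fun k => (hYA _).2, ?_, fun x hx => ⟨?_, ?_, ?_, ?_⟩⟩
  · exact tendsto_nhds_unique (hV R ⟨hAR.le, hRB⟩) (by simp [hVR])
  · exact le_of_tendsto' (hY x hx).abs fun k => hYb _ x hx
  · exact le_of_tendsto_of_tendsto' (hV x hx).abs ((hw x).mul_const _) fun k => hVb _ x hx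
  · have hint : Tendsto (fun k => ∫ t in A..x, regInv α (e (φ k)) (V (φ k) t / (t + e (φ k)) ^ n))
        atTop (𝓝 (∫ t in A..x, regInv α 0 ((G t).2 / t ^ n))) := by
      refine intervalIntegral.tendsto_integral_filter_of_dominated_convergence
        (fun _ => (K * (B - A)) ^ α) (.of_forall fun k => ?_) (.of_forall fun k => ?_) (by simp)
        (.of_forall fun t ht => ?_)
      · rw [uIoc_of_le hx.1]
        refine ContinuousOn.aestronglyMeasurable ?_ measurableSet_Ioc
        exact (continuous_regInv hα hα1).comp_continuousOn
          (((hs _).continuousOn_slope hA (he0 _)).mono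
            (Ioc_subset_Icc_self.trans (Icc_subset_Icc le_rfl hx.2)))
      · refine .of_forall fun t ht => ?_
        rw [uIoc_of_le hx.1] at ht
        refine (abs_regInv_le hα hα1 _).trans ?_
        have := (hs (φ k)).abs_slope_le hA (he0 _) (fun _ _ => hh.bdd _)
          ⟨ht.1.le, ht.2.trans hx.2⟩
        gcongr
      · rw [uIoc_of_le hx.1] at ht
        exact tendsto_regInv hα hα1 heφ ((hV t ⟨ht.1.le, ht.2.trans hx.2⟩).div (hw t)
          (pow_pos (hA.trans_lt ht.1) n).ne')
    refine tendsto_nhds_unique (hY x hx) (((hY A hAm).add hint).congr fun k => ?_)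
    exact ((hs _).y_eq_integral hα hα1 hA (he0 _) hx).symm
  · have hint : Tendsto (fun k => ∫ t in A..x, -((t + e (φ k)) ^ n * h (Y (φ k) t)))
        atTop (𝓝 (∫ t in A..x, -(t ^ n * h (G t).1))) := by
      refine intervalIntegral.tendsto_integral_filter_of_dominated_convergence
        (fun _ => (B + 1) ^ n * K) (.of_forall fun k => ?_) (.of_forall fun k => ?_) (by simp)
        (.of_forall fun t ht => ?_)
      · rw [uIoc_of_le hx.1]
        refine ContinuousOn.aestronglyMeasurable ?_ measurableSet_Ioc
        exact (ContinuousOn.mul (by fun_prop) (hh.continuous.comp_continuousOn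
          ((hs _).continuousOn_y.mono
            (Ioc_subset_Icc_self.trans (Icc_subset_Icc le_rfl hx.2))))).neg
      · refine .of_forall fun t ht => ?_
        rw [uIoc_of_le hx.1] at ht
        have h0 : 0 ≤ t + e (φ k) := by linarith [ht.1, he0 (φ k)]
        rw [norm_neg, norm_mul, Real.norm_eq_abs, Real.norm_eq_abs, abs_of_nonneg (by positivity)]
        have := hh.bdd (Y (φ k) t)
        have := he1 (φ k)
        gcongr
        exact ht.2.trans hx.2
      · rw [uIoc_of_le hx.1] at ht
        exact ((hw t).mul ((hh.continuous.tendsto _).comp (hY t ⟨ht.1.le, ht.2.trans hx.2⟩))).neg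
    refine tendsto_nhds_unique (hV x hx) (hint.congr fun k => ?_)
    exact ((hs _).v_eq_integral hh hx).symm

end RegSol

theorem exists_isForce {f : ℝ → ℝ} (hf : ContDiffOn ℝ 1 f (Ioi 0)) (hf1 : f 1 = 0) {m : ℝ}
    (hm : 0 < m) (hfm : HasDerivAt f m 1) {σ : ℝ} (hσ : |σ| = 1) :
    ∃ C K c η, η ≤ 1 / 2 ∧
      IsForce (fun y => σ * f (1 + σ * max (-η) (min η y))) C K c η := by
  have hσ2 : σ * σ = 1 := by rw [← abs_mul_abs_self, hσ, one_mul]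
  have h1 := hfm.isLittleO.def (half_pos hm)
  obtain ⟨ρ, hρ, hball⟩ := Metric.eventually_nhds_iff.1 h1
  set η := min (ρ / 2) (1 / 2) with hη
  have hη0 : 0 < η := lt_min (by linarith) (by norm_num)
  have hη2 : η ≤ 1 / 2 := min_le_right _ _
  have hηρ : η < ρ := (min_le_left _ _).trans_lt (by linarith)
  have hlow : ∀ t, |t| ≤ η → m / 2 * t ^ 2 ≤ t * f (1 + t) := by
    intro t ht
    have := hball (y := 1 + t) (by rw [Real.dist_eq]; simpa using ht.trans_lt hηρ)
    rw [hf1, add_sub_cancel_left, sub_zero, smul_eq_mul, Real.norm_eq_abs, Real.norm_eq_abs] at this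
    have h2 : |t * (f (1 + t) - t * m)| ≤ m / 2 * t ^ 2 := by
      rw [abs_mul, ← sq_abs t]
      nlinarith [abs_nonneg t]
    nlinarith [neg_abs_le (t * (f (1 + t) - t * m))]
  have hIcc : Icc (1 - η) (1 + η) ⊆ Ioi 0 := fun x hx => by
    have := hx.1
    rw [mem_Ioi]
    linarith
  obtain ⟨L, hL⟩ := (hf.mono hIcc).exists_lipschitzOnWith one_ne_zero
    (convex_Icc _ _) isCompact_Icc
  have hcl := abs_clamp_le hη0.le
  have hmem : ∀ s, |s| ≤ η → 1 + σ * s ∈ Icc (1 - η) (1 + η) := by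
    intro s hs
    have : |σ * s| ≤ η := by rwa [abs_mul, hσ, one_mul]
    rw [abs_le] at this
    constructor <;> linarith
  have hLs : ∀ s t, |s| ≤ η → |t| ≤ η →
      |σ * f (1 + σ * s) - σ * f (1 + σ * t)| ≤ (L + 1) * |s - t| := by
    intro s t hs ht
    have := hL.dist_le_mul _ (hmem s hs) _ (hmem t ht)
    rw [Real.dist_eq, Real.dist_eq, add_sub_add_left_eq_sub, ← mul_sub, abs_mul, hσ, one_mul] at this
    rw [← mul_sub, abs_mul, hσ, one_mul]
    nlinarith [abs_nonneg (s - t)]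
  have hL0 : (0 : ℝ) ≤ L := L.2
  have hlow' : ∀ s, |s| ≤ η → m / 2 * s ^ 2 ≤ s * (σ * f (1 + σ * s)) := by
    intro s hs
    have := hlow (σ * s) (by rwa [abs_mul, hσ, one_mul])
    rw [mul_pow, sq σ, hσ2, one_mul] at this
    linarith
  have hz : σ * f (1 + σ * 0) = 0 := by rw [mul_zero, add_zero, hf1, mul_zero]
  have hc0 : max (-η) (min η 0) = 0 := clamp_eq_self (by simpa using hη0.le)
  refine ⟨L + 1, (L + 1) * η, m / 2, η, hη2, ⟨by positivity, by positivity, hη0, fun x y => ?_,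
    ?_, fun x => ?_, fun x => ?_, fun x hx => ?_⟩⟩
  · refine (hLs _ _ (hcl x) (hcl y)).trans ?_
    exact mul_le_mul_of_nonneg_left (abs_clamp_sub_clamp_le _ _ _) (by positivity)
  · simp only [hc0, hz]
  · have h2 := hLs _ 0 (hcl x) (by simpa using hη0.le)
    rw [hz, sub_zero, sub_zero] at h2
    exact h2.trans (mul_le_mul_of_nonneg_left (hcl x) (by positivity))
  · have h2 := hlow' _ (hcl x)
    have h3 : 0 ≤ max (-η) (min η x) * (σ * f (1 + σ * max (-η) (min η x))) :=
      le_trans (by positivity) h2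
    rcases lt_trichotomy x 0 with hx | rfl | hx
    · have hneg : max (-η) (min η x) < 0 :=
        max_lt (by linarith) ((min_le_right _ _).trans_lt hx)
      exact mul_nonneg_of_nonpos_of_nonpos hx.le (nonpos_of_mul_nonneg_right h3 hneg)
    · simp
    · have hpos : 0 < max (-η) (min η x) := lt_max_of_lt_right (lt_min hη0 hx)
      exact mul_nonneg hx.le (nonneg_of_mul_nonneg_right h3 hpos)
  · simp only [clamp_eq_self hx]
    exact hlow' x hx

theorem NeumannSol.nonConstOn {p : ℝ} {N : ℕ} {R1 R2 : ℝ} {f u : ℝ → ℝ}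
    (hu : NeumannSol p N R1 R2 f u) (hR1 : 0 ≤ R1) (hR12 : R1 < R2) (hf : f (u R1) ≠ 0) :
    NonConstOn R1 R2 u := by
  by_contra hcon
  have hconst : ∀ x ∈ Icc R1 R2, u x = u R1 := fun x hx => by
    by_contra hne
    exact hcon ⟨x, hx, R1, left_mem_Icc.2 hR12.le, hne⟩
  obtain ⟨x, hx⟩ := exists_between hR12
  have hder : ∀ t ∈ Ioo R1 R2, deriv u t = 0 := fun t ht => by
    have : u =ᶠ[𝓝 t] fun _ => u R1 := by
      filter_upwards [Icc_mem_nhds ht.1 ht.2] with s hs using hconst s hs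
    rw [this.deriv_eq, deriv_const]
  have h1 := hu.2.2.2.2.2.2 x ⟨hx.1, hx.2.le⟩
  have h2 : (fun t => t ^ (N - 1) * phip p (deriv u t)) =ᶠ[𝓝 x] fun _ => 0 := by
    filter_upwards [Ioo_mem_nhds hx.1 hx.2] with t ht
    rw [hder t ht]; simp [phip]
  have h3 := h1.unique ((hasDerivAt_const x (0 : ℝ)).congr_of_eventuallyEq h2)
  rw [hconst x ⟨hx.1.le, hx.2.le⟩] at h3
  have h4 : 0 < x ^ (N - 1) := pow_pos (hR1.trans_lt hx.1) _
  exact (mul_ne_zero (neg_ne_zero.2 h4.ne') hf) h3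

theorem phip_mul_of_abs_eq_one {p σ : ℝ} (hσ : |σ| = 1) (s : ℝ) :
    phip p (σ * s) = σ * phip p s := by
  rw [phip, phip, abs_mul, hσ, one_mul]; ring

/-- Solutions of the Neumann problem whose initial value is close to, but differs from, `1`. -/
theorem exists_neumannSol {p : ℝ} (hp : 2 < p) (N : ℕ) {R1 R2 : ℝ} (hR1 : 0 ≤ R1)
    (hR12 : R1 < R2) {f : ℝ → ℝ} {σ : ℝ} (hσ : |σ| = 1) {C K c η : ℝ} (hη2 : η ≤ 1 / 2)
    (hh : IsForce (fun y => σ * f (1 + σ * max (-η) (min η y))) C K c η) {δ : ℝ} (hδ : 0 < δ) :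
    ∃ u, NeumannSol p N R1 R2 f u ∧ NonConstOn R1 R2 u ∧
      0 < σ * (u R1 - 1) ∧ σ * (u R1 - 1) ≤ δ := by
  have hσ2 : σ * σ = 1 := by rw [← abs_mul_abs_self, hσ, one_mul]
  have hα : 0 < 1 / (p - 1) := by
    have : 0 < p - 1 := by linarith
    positivity
  have hα1 : 1 / (p - 1) < 1 := by rw [div_lt_one (by linarith)]; linarith
  have hC := hh.C_pos
  have hc := hh.c_pos
  have hη := hh.η_pos
  have hK := hh.K_nonneg
  set δ₁ := min (min δ 1) (√(c * η ^ 2 / (2 * C))) with hδ₁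
  have hδ₁0 : 0 < δ₁ := lt_min (lt_min hδ one_pos) (by positivity)
  have hδη : C * δ₁ ^ 2 < c * η ^ 2 := by
    have h1 : δ₁ ^ 2 ≤ √(c * η ^ 2 / (2 * C)) ^ 2 := by
      gcongr
      exact min_le_right _ _
    rw [Real.sq_sqrt (by positivity), le_div_iff₀ (by positivity)] at h1
    have : 0 < c * η ^ 2 := by positivity
    nlinarith
  obtain ⟨y, v, hyc, hvc, hy0, hyδ, hvR, hyv⟩ := RegSol.exists_limit (n := N - 1) (B := R2 + 1)
    hα hα1 hR1 hR12 (by linarith) hh hδ₁0 ((min_le_left _ _).trans (min_le_right _ _)) hδη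
  have hAB : R1 ≤ R2 + 1 := by linarith
  have hAm : R1 ∈ Icc R1 (R2 + 1) := left_mem_Icc.2 hAB
  have hslope : ∀ t ∈ Icc R1 (R2 + 1), |v t / t ^ (N - 1)| ≤ K * (t - R1) := by
    intro t ht
    have ht0 : 0 ≤ t ^ (N - 1) := pow_nonneg (hR1.trans ht.1) _
    have h1 : 0 ≤ t - R1 := by linarith [ht.1]
    rw [abs_div, abs_of_nonneg ht0]
    refine div_le_of_le_mul₀ ht0 (by positivity) ?_
    rw [mul_comm]
    exact (hyv t ht).2.1
  have hslopec : ContinuousOn (fun t => v t / t ^ (N - 1)) (Icc R1 (R2 + 1)) := by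
    intro t ht
    rcases eq_or_lt_of_le ht.1 with rfl | hlt
    · have h0 : v R1 / R1 ^ (N - 1) = 0 := by
        have := hslope R1 ht
        rw [sub_self, mul_zero] at this
        exact abs_nonpos_iff.1 this
      rw [ContinuousWithinAt, h0]
      refine squeeze_zero_norm' (a := fun t => K * (t - R1)) ?_ ?_
      · filter_upwards [self_mem_nhdsWithin] with t ht using hslope t ht
      · have : Continuous fun t => K * (t - R1) := by fun_prop
        simpa using (this.tendsto R1).mono_left nhdsWithin_le_nhds
    · exact (hvc t ht).div (by fun_prop) (pow_pos (hR1.trans_lt hlt) _).ne'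
  set g : ℝ → ℝ := IccExtend hAB ((Icc R1 (R2 + 1)).domRestrict
    fun t => regInv (1 / (p - 1)) 0 (v t / t ^ (N - 1))) with hg
  have hgc : Continuous g := (continuousOn_iff_continuous_domRestrict.1
    ((continuous_regInv hα hα1).comp_continuousOn hslopec)).Icc_extend'
  have hgeq : ∀ t ∈ Icc R1 (R2 + 1), g t = regInv (1 / (p - 1)) 0 (v t / t ^ (N - 1)) :=
    fun t ht => by rw [hg, IccExtend_of_mem hAB _ ht, domRestrict_apply]
  set Y : ℝ → ℝ := fun x => y R1 + ∫ t in R1..x, g t with hY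
  have hYd : ∀ x, HasDerivAt Y (g x) x := fun x =>
    (intervalIntegral.integral_hasDerivAt_right (hgc.intervalIntegrable _ _)
      hgc.aestronglyMeasurable.stronglyMeasurableAtFilter hgc.continuousAt).const_add _
  have hYc : Continuous Y := continuous_iff_continuousAt.2 fun x => (hYd x).continuousAt
  have hYeq : ∀ x ∈ Icc R1 (R2 + 1), Y x = y x := by
    intro x hx
    rw [(hyv x hx).2.2.1, hY]
    simp only
    congr 1
    refine intervalIntegral.integral_congr fun t ht => ?_
    rw [uIcc_of_le hx.1] at ht
    exact hgeq t ⟨ht.1, ht.2.trans hx.2⟩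
  have hhY : Continuous fun t => -(t ^ (N - 1) * (σ * f (1 + σ * max (-η) (min η (Y t))))) :=
    ((continuous_pow _).mul (hh.continuous.comp hYc)).neg
  set W : ℝ → ℝ := fun x => ∫ t in R1..x,
    -(t ^ (N - 1) * (σ * f (1 + σ * max (-η) (min η (Y t))))) with hW
  have hWd : ∀ x, HasDerivAt W
      (-(x ^ (N - 1) * (σ * f (1 + σ * max (-η) (min η (Y x)))))) x := fun x =>
    intervalIntegral.integral_hasDerivAt_right (hhY.intervalIntegrable _ _)
      hhY.aestronglyMeasurable.stronglyMeasurableAtFilter hhY.continuousAt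
  have hWeq : ∀ x ∈ Icc R1 (R2 + 1), v x = W x := by
    intro x hx
    rw [(hyv x hx).2.2.2, hW]
    refine intervalIntegral.integral_congr fun t ht => ?_
    rw [uIcc_of_le hx.1] at ht
    simp only [hYeq t ⟨ht.1, ht.2.trans hx.2⟩]
  have hud : ∀ x, HasDerivAt (fun x => 1 + σ * Y x) (σ * g x) x := fun x =>
    ((hYd x).const_mul σ).const_add 1
  have hderiv : deriv (fun x => 1 + σ * Y x) = fun x => σ * g x := funext fun x => (hud x).deriv
  have hflux : ∀ t ∈ Icc R1 (R2 + 1), t ^ (N - 1) * phip p (σ * g t) = σ * W t := by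
    intro t ht
    rw [phip_mul_of_abs_eq_one hσ, hgeq t ht, phip_regInv hp, ← hWeq t ht]
    rcases eq_or_ne (t ^ (N - 1)) 0 with h0 | h0
    · have := (hyv t ht).2.1
      rw [h0, zero_mul] at this
      rw [h0, abs_nonpos_iff.1 this]; simp
    · field_simp
  have hsub : Icc R1 R2 ⊆ Icc R1 (R2 + 1) := Icc_subset_Icc le_rfl (by linarith)
  have hYη : ∀ x ∈ Icc R1 R2, |Y x| ≤ η := fun x hx => by
    rw [hYeq x (hsub hx)]; exact (hyv x (hsub hx)).1
  have hreg0 : regInv (1 / (p - 1)) 0 0 = 0 := by simp [regInv]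
  have hsol : NeumannSol p N R1 R2 f (fun x => 1 + σ * Y x) := by
    refine ⟨fun x _ => (hud x).differentiableAt, ?_, fun x hx => ?_, ?_, ?_, ?_, fun x hx => ?_⟩
    · rw [hderiv]
      exact (continuous_const.mul hgc).continuousOn
    · have h1 : |σ * Y x| ≤ η := by rw [abs_mul, hσ, one_mul]; exact hYη x hx
      linarith [neg_abs_le (σ * Y x)]
    · have h0 := hslope R1 hAm
      rw [sub_self, mul_zero, abs_nonpos_iff] at h0
      rw [hderiv]
      simp only [hgeq R1 hAm, h0, hreg0, mul_zero]
    · rw [hderiv]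
      simp only [hgeq R2 ⟨hR12.le, by linarith⟩, hvR, zero_div, hreg0, mul_zero]
    · rw [hderiv]
      have hWc : Continuous fun t => σ * W t := continuous_const.mul
        (continuous_iff_continuousAt.2 fun x => (hWd x).continuousAt)
      exact hWc.continuousOn.congr fun t ht => hflux t (hsub ht)
    · rw [hderiv]
      have hev : (fun t => t ^ (N - 1) * phip p (σ * g t)) =ᶠ[𝓝 x] fun t => σ * W t := by
        filter_upwards [Icc_mem_nhds hx.1 (by linarith [hx.2] : x < R2 + 1)] with t ht
          using hflux t ht
      refine (((hWd x).const_mul σ).congr_of_eventuallyEq hev).congr_deriv ?_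
      rw [clamp_eq_self (hYη x ⟨hx.1.le, hx.2⟩)]
      linear_combination (-(x ^ (N - 1)) * f (1 + σ * Y x)) * hσ2
  have hu0 : σ * (1 + σ * Y R1 - 1) = y R1 := by
    rw [hYeq R1 hAm]
    linear_combination y R1 * hσ2
  have hne : f (1 + σ * Y R1) ≠ 0 := by
    intro h0
    have h1 := hYη R1 (left_mem_Icc.2 hR12.le)
    have h2 := hh.lower _ h1
    simp only [clamp_eq_self h1, h0, mul_zero] at h2
    rw [hYeq R1 hAm] at h2
    have : 0 < c * y R1 ^ 2 := by positivity
    linarith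
  exact ⟨_, hsol, hsol.nonConstOn hR1 hR12 hne, by rw [hu0]; exact hy0, by
    rw [hu0]; exact hyδ.trans ((min_le_left _ _).trans (min_le_left _ _))⟩

theorem infinite_image_domRestrict {R1 R2 : ℝ} (hR12 : R1 ≤ R2) {S : Set (ℝ → ℝ)}
    (hS : ∀ δ > 0, ∃ u ∈ S, 0 < |u R1 - 1| ∧ |u R1 - 1| ≤ δ) :
    Set.Infinite ((fun u : ℝ → ℝ => (Icc R1 R2).domRestrict u) '' S) := by
  intro hfin
  have h1 := ((hfin.image fun w => |w ⟨R1, left_mem_Icc.2 hR12⟩ - 1|).sdiff (t := {0}))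
  obtain ⟨δ, hδ, hball⟩ := Metric.mem_nhds_iff.1
    (h1.isClosed.isOpen_compl.mem_nhds (show (0 : ℝ) ∈ _ᶜ from fun h => h.2 rfl))
  obtain ⟨u, hu, hu0, huδ⟩ := hS (δ / 2) (half_pos hδ)
  refine hball (a := |u R1 - 1|) ?_ ⟨⟨_, ⟨u, hu, rfl⟩, rfl⟩, hu0.ne'⟩
  rw [Metric.mem_ball, Real.dist_eq, sub_zero, abs_abs]
  linarith

theorem exists_isForce_powers {q r : ℝ} (hrq : r < q) {σ : ℝ} (hσ : |σ| = 1) :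
    ∃ C K c η, η ≤ 1 / 2 ∧ IsForce (fun y => σ * (fun s : ℝ => s ^ (q - 1) - s ^ (r - 1))
      (1 + σ * max (-η) (min η y))) C K c η := by
  refine exists_isForce (f := fun s : ℝ => s ^ (q - 1) - s ^ (r - 1)) (m := q - r) ?_ (by simp)
    (by linarith) ?_ hσ
  · exact (contDiffOn_id.rpow_const_of_ne fun x hx => (mem_Ioi.1 hx).ne').sub
      (contDiffOn_id.rpow_const_of_ne fun x hx => (mem_Ioi.1 hx).ne')
  · refine ((Real.hasDerivAt_rpow_const (p := q - 1) (Or.inl one_ne_zero)).sub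
      (Real.hasDerivAt_rpow_const (p := r - 1) (Or.inl one_ne_zero))).congr_deriv ?_
    simp

theorem stmt3 (p : ℝ) (hp : 2 < p) (N : ℕ) (hN : 1 ≤ N)
    (R1 R2 : ℝ) (hR1 : 0 ≤ R1) (hR12 : R1 < R2)
    (q r : ℝ) (hpr : p ≤ r) (hrq : r < q)
    (hsub : R1 = 0 → (q : EReal) < pstar p N) :
    Set.Infinite ((fun u : ℝ → ℝ => (Icc R1 R2).restrict u) ''
      {u : ℝ → ℝ | NeumannSol p N R1 R2 (fun s => s ^ (q - 1) - s ^ (r - 1)) u ∧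
        NonConstOn R1 R2 u ∧ 1 < u R1}) ∧
    Set.Infinite ((fun u : ℝ → ℝ => (Icc R1 R2).restrict u) ''
      {u : ℝ → ℝ | NeumannSol p N R1 R2 (fun s => s ^ (q - 1) - s ^ (r - 1)) u ∧
        NonConstOn R1 R2 u ∧ u R1 < 1}) := by
  constructor
  · obtain ⟨C, K, c, η, hη, hh⟩ := exists_isForce_powers hrq (σ := 1) (by simp)
    refine infinite_image_domRestrict hR12.le fun δ hδ => ?_
    obtain ⟨u, hu, hnc, h0, h1⟩ := exists_neumannSol (σ := 1)
      (f := fun s : ℝ => s ^ (q - 1) - s ^ (r - 1)) hp N hR1 hR12 (by simp) hη hh hδ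
    rw [one_mul] at h0 h1
    exact ⟨u, ⟨hu, hnc, by linarith⟩, abs_pos.2 h0.ne', by rwa [abs_of_pos h0]⟩
  · obtain ⟨C, K, c, η, hη, hh⟩ := exists_isForce_powers hrq (σ := -1) (by simp)
    refine infinite_image_domRestrict hR12.le fun δ hδ => ?_
    obtain ⟨u, hu, hnc, h0, h1⟩ := exists_neumannSol (σ := -1)
      (f := fun s : ℝ => s ^ (q - 1) - s ^ (r - 1)) hp N hR1 hR12 (by simp) hη hh hδ
    have h2 : u R1 - 1 < 0 := by linarith
    exact ⟨u, ⟨hu, hnc, by linarith⟩, abs_pos.2 h2.ne, by rw [abs_of_neg h2]; linarith⟩
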